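/- (Monotonicity in time of the potential.) Let d > 2s and let ρ be an admissible weight with exponents (γ₀,γ). Let u be a weak solution of the Cauchy problem ρ u_t + (-Δ)^s(u^m) = 0 with initial datum the positive finite Radon measure μ, and define the potential U(x,t) := k ∫_{ℝ^d} |x-y|^{2s-d} u(y,t) ρ(y) dy ∈ [0,∞]. Then U is essentially nonincreasing in time: for almost every pair (t₁,t₂) with 0 < t₁ ≤ t₂, one has U(x,t₂) ≤ U(x,t₁) for a.e. x ∈ ℝ^d. -/

import Mathlib

open MeasureTheory Filter Topology Set
open scoped ENNReal NNReal

noncomputable section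

/-- `d`-dimensional Euclidean space. -/
abbrev Ed (d : ℕ) : Type := EuclideanSpace ℝ (Fin d)

/-- An admissible weight with exponents `(γ₀, γ)` and constants `0 < c < C`:
a measurable, everywhere positive function comparable to `|x|^{-γ₀}` near the
origin and to `|x|^{-γ}` at infinity. -/
def AdmissibleWeight (d : ℕ) (ρ : Ed d → ℝ) (γ₀ γ c C : ℝ) : Prop :=
  0 < c ∧ c < C ∧ Measurable ρ ∧ (∀ x, 0 < ρ x) ∧
    (∀ᵐ x ∂(volume : Measure (Ed d)), ‖x‖ ≤ 1 →
      c * ‖x‖ ^ (-γ₀) ≤ ρ x ∧ ρ x ≤ C * ‖x‖ ^ (-γ₀)) ∧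
    (∀ᵐ x ∂(volume : Measure (Ed d)), 1 < ‖x‖ →
      c * ‖x‖ ^ (-γ) ≤ ρ x ∧ ρ x ≤ C * ‖x‖ ^ (-γ))

/-- The Gagliardo bilinear form `E(v,w)` of order `s` with normalizing constant `κ`. -/
def gagliardoE (d : ℕ) (s κ : ℝ) (v w : Ed d → ℝ) : ℝ :=
  (κ / 2) * ∫ p : Ed d × Ed d,
    (v p.1 - v p.2) * (w p.1 - w p.2) / ‖p.1 - p.2‖ ^ ((d : ℝ) + 2 * s)

/-- The squared homogeneous fractional Sobolev seminorm `‖v‖_{Ḣ^s}² = E(v,v)`,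
with values in `[0,∞]`. -/
def gagliardoSq (d : ℕ) (s κ : ℝ) (v : Ed d → ℝ) : ℝ≥0∞ :=
  ENNReal.ofReal (κ / 2) * ∫⁻ p : Ed d × Ed d,
    ENNReal.ofReal ((v p.1 - v p.2) ^ 2 / ‖p.1 - p.2‖ ^ ((d : ℝ) + 2 * s))

/-- The weighted `L^p` norm `‖v‖_{p,ρ}`, valued in `[0,∞]`. -/
def wnorm (d : ℕ) (p : ℝ) (ρ v : Ed d → ℝ) : ℝ≥0∞ :=
  (∫⁻ x : Ed d, ENNReal.ofReal (|v x| ^ p * ρ x)) ^ (1 / p)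

/-- Smooth compactly supported test functions on `ℝ^d × (0,∞)`. -/
def IsTestFn (d : ℕ) (φ : Ed d × ℝ → ℝ) : Prop :=
  ContDiff ℝ (⊤ : ℕ∞) φ ∧ HasCompactSupport φ ∧ tsupport φ ⊆ univ ×ˢ Ioi (0 : ℝ)

/-- Conditions (i)–(iii) of the definition of weak solution of
`ρ u_t + (-Δ)^s(u^m) = 0` on `ℝ^d × (0,∞)` (no initial datum prescribed). -/
structure WeakSolCore (d : ℕ) (s m κ : ℝ) (ρ : Ed d → ℝ) (u : Ed d → ℝ → ℝ) : Prop where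
  measurable : Measurable (Function.uncurry u)
  nonneg : ∀ x t, 0 ≤ u x t
  /-- (i), first part: `ess sup_{t>0} ∫ u(·,t) ρ < ∞`. -/
  massBound : ∃ M : ℝ, ∀ᵐ t ∂(volume.restrict (Ioi (0 : ℝ))),
    Integrable (fun x : Ed d => u x t * ρ x) ∧ (∫ x : Ed d, u x t * ρ x) ≤ M
  /-- (i), second part: `u` essentially bounded on `ℝ^d × (τ,∞)` for every `τ > 0`. -/
  essBdd : ∀ τ : ℝ, 0 < τ → ∃ B : ℝ,
    ∀ᵐ p ∂(volume : Measure (Ed d × ℝ)), τ < p.2 → u p.1 p.2 ≤ B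
  /-- (ii), first part: `‖u^m(·,t)‖_{Ḣ^s} < ∞` for a.e. `t > 0`. -/
  energyFinite : ∀ᵐ t ∂(volume.restrict (Ioi (0 : ℝ))),
    gagliardoSq d s κ (fun x => u x t ^ m) < ⊤
  /-- (ii), second part: `t ↦ ‖u^m(·,t)‖_{Ḣ^s}²` locally integrable on `(0,∞)`. -/
  energyLocInt : ∀ t₁ t₂ : ℝ, 0 < t₁ → t₁ < t₂ →
    (∫⁻ t in Ioc t₁ t₂, gagliardoSq d s κ (fun x => u x t ^ m)) ≠ ⊤
  /-- (iii): the weak formulation against all test functions. -/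
  weakForm : ∀ φ : Ed d × ℝ → ℝ, IsTestFn d φ →
    -(∫ t in Ioi (0 : ℝ), ∫ x : Ed d, u x t * deriv (fun τ => φ (x, τ)) t * ρ x)
      + ∫ t in Ioi (0 : ℝ),
          gagliardoE d s κ (fun x => u x t ^ m) (fun x => φ (x, t)) = 0

/-- Condition (iv): `ρ(·)u(·,t) → μ` as `t → 0` essentially, tested against all
bounded continuous functions. -/
def HasInitialTrace (d : ℕ) (ρ : Ed d → ℝ) (u : Ed d → ℝ → ℝ)
    (μ : Measure (Ed d)) : Prop :=
  ∃ N : Set ℝ, volume N = 0 ∧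
    ∀ φ : Ed d → ℝ, Continuous φ → (∃ B : ℝ, ∀ x, |φ x| ≤ B) →
      Tendsto (fun t => ∫ x : Ed d, φ x * (u x t * ρ x))
        (𝓝[(Ioi (0 : ℝ)) \ N] 0) (𝓝 (∫ x, φ x ∂μ))

/-- Weak solution of the Cauchy problem with initial datum `μ`. -/
def IsWeakSolution (d : ℕ) (s m κ : ℝ) (ρ : Ed d → ℝ) (μ : Measure (Ed d))
    (u : Ed d → ℝ → ℝ) : Prop :=
  WeakSolCore d s m κ ρ u ∧ HasInitialTrace d ρ u μ

/-- The Riesz potential (of order `2s`, constant `k`) of `ρ(·)u(·,t)`, valued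
in `[0,∞]`. -/
def rieszPotU (d : ℕ) (s k : ℝ) (ρ : Ed d → ℝ) (u : Ed d → ℝ → ℝ)
    (x : Ed d) (t : ℝ) : ℝ≥0∞ :=
  ENNReal.ofReal k *
    ∫⁻ y : Ed d, (ENNReal.ofReal ‖x - y‖) ^ (2 * s - (d : ℝ)) *
      ENNReal.ofReal (u y t * ρ y)

/-- The Riesz potential (of order `2s`, constant `k`) of a measure `μ`. -/
def rieszPotMeas (d : ℕ) (s k : ℝ) (μ : Measure (Ed d)) (x : Ed d) : ℝ≥0∞ :=
  ENNReal.ofReal k *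
    ∫⁻ y, (ENNReal.ofReal ‖x - y‖) ^ (2 * s - (d : ℝ)) ∂μ

/-!
Test the equation with `θ(t) ψ(x)`, where `ψ` is a smooth truncation `T_r(· - x₀)` of the Riesz
kernel near its singularity minus a truncation `T_R(· - x₀)` at a much larger scale, so that `ψ`
has compact support. The Riesz kernel is superharmonic for `(-Δ)^s`, and a concave function of it
still is, so `(-Δ)^s T_r ≥ 0`. The outer truncation satisfies
`(-Δ)^s T_R ≲ R^{γ-d} (1 + |x|)^{-γ}`, which `u^m` turns into at most a multiple of
`R^{γ-d} ∫ u ρ` because `u` is bounded and `ρ ≳ (1 + |x|)^{-γ}`. Hence `∫ u ρ ψ` increases in time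
at a rate of order at most `R^{γ-d}`. Letting `R → ∞` makes `∫ u ρ T_r(· - x₀)` nonincreasing, for
all `x₀` at once by continuity in `x₀`, and letting `r → 0` recovers the potential by Fatou's
lemma.

The superharmonicity of the Riesz kernel is proved by scaling: its fractional Laplacian is a
constant multiple of `|x|^{-d}`, and a negative constant would keep the integral of `(-Δ)^s T_1`
over large dyadic annuli away from `0`. Yet over `B_{2R} \ B_R` this is the integral over `B_{2R}`
of `(-Δ)^s (T_1 - T_2)`, and the fractional Laplacian of a test function has mean zero.
-/

open Module (finrank)

section Kernels

variable {E : Type*} [NormedAddCommGroup E]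

/-- The symmetric second difference `2 f(x) - f(x + z) - f(x - z)`. -/
def secDiff (f : E → ℝ) (x z : E) : ℝ := 2 * f x - f (x + z) - f (x - z)

lemma secDiff_comp_sub_right (f : E → ℝ) (a x z : E) :
    secDiff (fun y => f (y - a)) x z = secDiff f (x - a) z := by
  simp only [secDiff, add_sub_right_comm, sub_right_comm]

lemma abs_secDiff_le_of_abs_le {f : E → ℝ} {A : ℝ} (hA : ∀ x, |f x| ≤ A) (x z : E) :
    |secDiff f x z| ≤ 4 * A := by
  have h₁ := abs_le.1 (hA x)
  have h₂ := abs_le.1 (hA (x + z))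
  have h₃ := abs_le.1 (hA (x - z))
  rw [secDiff, abs_le]
  constructor <;> linarith [h₁.1, h₁.2, h₂.1, h₂.2, h₃.1, h₃.2]

lemma abs_secDiff_le_max_mul_min {f : E → ℝ} {A C : ℝ} (hA : ∀ x, |f x| ≤ A)
    (hC : ∀ x z, |secDiff f x z| ≤ C * ‖z‖ ^ 2) (x z : E) :
    |secDiff f x z| ≤ max (4 * A) C * min 1 (‖z‖ ^ 2) := by
  rcases le_total 1 (‖z‖ ^ 2) with h | h
  · rw [min_eq_left h, mul_one]
    exact (abs_secDiff_le_of_abs_le hA x z).trans (le_max_left _ _)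
  · rw [min_eq_right h]
    exact (hC x z).trans (mul_le_mul_of_nonneg_right (le_max_right _ _) (sq_nonneg _))

@[fun_prop]
lemma measurable_secDiff_right [MeasurableSpace E] [BorelSpace E] {f : E → ℝ} (hf : Measurable f)
    (x : E) : Measurable (secDiff f x) := by
  unfold secDiff; fun_prop

variable [InnerProductSpace ℝ E]

/-- The singular kernel `|z|^{-(n+2s)}` of the fractional Laplacian on an `n`-dimensional space. -/
def fracKernel (s : ℝ) (z : E) : ℝ := ‖z‖ ^ (-((finrank ℝ E : ℝ) + 2 * s))

/-- The fractional Laplacian `(-Δ)^s f`, up to its (positive) normalizing constant, written with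
second differences so that the integral converges absolutely for bounded `C²` functions. -/
def fracLaplacian [FiniteDimensional ℝ E] [MeasurableSpace E] [BorelSpace E] (s : ℝ) (f : E → ℝ)
    (x : E) : ℝ :=
  ∫ z, fracKernel s z * secDiff f x z

/-- The Riesz kernel `|x|^{2s-n}` on an `n`-dimensional space. -/
def rieszKernel (s : ℝ) (x : E) : ℝ := ‖x‖ ^ (2 * s - (finrank ℝ E : ℝ))

/-- The dilation by `r` that fixes the Riesz kernel. -/
def rieszDilation (s r : ℝ) (f : E → ℝ) (x : E) : ℝ :=
  r ^ (2 * s - (finrank ℝ E : ℝ)) * f (r⁻¹ • x)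

variable {s r M : ℝ} {f : E → ℝ}

lemma fracKernel_nonneg (s : ℝ) (z : E) : 0 ≤ fracKernel s z := Real.rpow_nonneg (norm_nonneg z) _

lemma rieszKernel_nonneg (s : ℝ) (x : E) : 0 ≤ rieszKernel s x := Real.rpow_nonneg (norm_nonneg x) _

lemma fracKernel_neg (z : E) : fracKernel s (-z) = fracKernel s z := by
  rw [fracKernel, norm_neg, fracKernel]

lemma fracKernel_smul (hr : 0 < r) (z : E) :
    fracKernel s (r • z) = r ^ (-((finrank ℝ E : ℝ) + 2 * s)) * fracKernel s z := by
  rw [fracKernel, norm_smul, Real.norm_of_nonneg hr.le, Real.mul_rpow hr.le (norm_nonneg _),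
    fracKernel]

lemma rieszKernel_smul (hr : 0 < r) (x : E) :
    rieszKernel s (r • x) = r ^ (2 * s - (finrank ℝ E : ℝ)) * rieszKernel s x := by
  rw [rieszKernel, norm_smul, Real.norm_of_nonneg hr.le, Real.mul_rpow hr.le (norm_nonneg _),
    rieszKernel]

lemma rieszDilation_rieszKernel (hr : 0 < r) :
    rieszDilation s r (rieszKernel s) = rieszKernel (E := E) s := by
  funext x
  rw [rieszDilation, ← rieszKernel_smul hr, smul_inv_smul₀ hr.ne']

lemma secDiff_rieszDilation (s r : ℝ) (f : E → ℝ) (x z : E) :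
    secDiff (rieszDilation s r f) x z
      = r ^ (2 * s - (finrank ℝ E : ℝ)) * secDiff f (r⁻¹ • x) (r⁻¹ • z) := by
  simp only [secDiff, rieszDilation, smul_add, smul_sub]; ring

lemma fracKernel_mul_secDiff_rieszDilation (hr : 0 < r) (f : E → ℝ) (x z : E) :
    fracKernel s z * secDiff (rieszDilation s r f) x z
      = r ^ (-2 * (finrank ℝ E : ℝ)) *
        (fracKernel s (r⁻¹ • z) * secDiff f (r⁻¹ • x) (r⁻¹ • z)) := by
  have hexp : r ^ (-2 * (finrank ℝ E : ℝ))
      = r ^ (-((finrank ℝ E : ℝ) + 2 * s)) * r ^ (2 * s - (finrank ℝ E : ℝ)) := by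
    rw [← Real.rpow_add hr]; ring_nf
  conv_lhs => rw [secDiff_rieszDilation, ← smul_inv_smul₀ hr.ne' z, fracKernel_smul hr]
  rw [smul_inv_smul₀ hr.ne', hexp]
  ring

lemma abs_fracKernel_mul_secDiff_le (hM : ∀ x z, |secDiff f x z| ≤ M * min 1 (‖z‖ ^ 2))
    (x z : E) : |fracKernel s z * secDiff f x z| ≤ M * (fracKernel s z * min 1 (‖z‖ ^ 2)) := by
  rw [abs_mul, abs_of_nonneg (fracKernel_nonneg s z), mul_left_comm]
  exact mul_le_mul_of_nonneg_left (hM x z) (fracKernel_nonneg s z)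

/-- A second difference of `f` at `(x, z)` vanishes unless one of `x`, `x + z`, `x - z` lies in
the support, whence a bound integrable on the product. -/
lemma abs_fracKernel_mul_secDiff_le_indicator (hM0 : 0 ≤ M)
    (hM : ∀ x z, |secDiff f x z| ≤ M * min 1 (‖z‖ ^ 2)) (x z : E) :
    |fracKernel s z * secDiff f x z| ≤
      M * ((tsupport f).indicator 1 x * (fracKernel s z * min 1 (‖z‖ ^ 2))
        + (tsupport f).indicator 1 (x + z) * (fracKernel s z * min 1 (‖z‖ ^ 2))
        + (tsupport f).indicator 1 (x - z) * (fracKernel s z * min 1 (‖z‖ ^ 2))) := by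
  set χ : E → ℝ := (tsupport f).indicator 1
  have hχ0 (y : E) : 0 ≤ χ y := indicator_nonneg (fun _ _ => zero_le_one) y
  have hχ1 (y : E) (hy : f y ≠ 0) : χ y = 1 := indicator_of_mem (subset_tsupport f hy) _
  have hker : 0 ≤ fracKernel s z * min 1 (‖z‖ ^ 2) :=
    mul_nonneg (fracKernel_nonneg s z) (by positivity)
  rw [← add_mul, ← add_mul, ← mul_assoc, mul_right_comm]
  by_cases h : f x = 0 ∧ f (x + z) = 0 ∧ f (x - z) = 0
  · simp only [secDiff, h.1, h.2.1, h.2.2, mul_zero, sub_zero, abs_zero]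
    exact mul_nonneg (mul_nonneg hM0 hker) (by linarith [hχ0 x, hχ0 (x + z), hχ0 (x - z)])
  · have hcover : 1 ≤ χ x + χ (x + z) + χ (x - z) := by
      have := hχ0 x; have := hχ0 (x + z); have := hχ0 (x - z)
      by_contra! hlt
      refine h ⟨?_, ?_, ?_⟩ <;> by_contra hne <;> linarith [hχ1 _ hne]
    exact (abs_fracKernel_mul_secDiff_le hM x z).trans
      (le_mul_of_one_le_right (mul_nonneg hM0 hker) hcover)

lemma exists_abs_secDiff_le (hf : ContDiff ℝ 2 f) (hc : HasCompactSupport f) :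
    ∃ M, 0 ≤ M ∧ ∀ x z, |secDiff f x z| ≤ M * min 1 (‖z‖ ^ 2) := by
  obtain ⟨A, hA⟩ := hc.exists_bound_of_continuous hf.continuous
  obtain ⟨C, hC⟩ := ContDiff.lipschitzWith_of_hasCompactSupport (hc.fderiv (𝕜 := ℝ))
    (hf.fderiv_right (m := 1) (by norm_num)) (by norm_num)
  have hdf : Differentiable ℝ f := hf.differentiable (by norm_num)
  refine ⟨max (4 * A) C, C.2.trans (le_max_right _ _), abs_secDiff_le_max_mul_min hA fun x z => ?_⟩
  have hderiv (y : E) : HasFDerivAt (fun y => f (y + z) - f y)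
      (fderiv ℝ f (y + z) - fderiv ℝ f y) y :=
    ((hasFDerivAt_comp_add_right z).2 (hdf (y + z)).hasFDerivAt).sub (hdf y).hasFDerivAt
  have hmv := (convex_univ (𝕜 := ℝ)).norm_image_sub_le_of_norm_hasFDerivWithin_le
    (C := C * ‖z‖) (x := x) (y := x - z) (fun y _ => (hderiv y).hasFDerivWithinAt)
    (fun y _ => by simpa using hC.norm_sub_le (y + z) y) (mem_univ _) (mem_univ _)
  simp only [sub_add_cancel, Real.norm_eq_abs, sub_sub_cancel_left, norm_neg] at hmv
  calc |secDiff f x z| = |f x - f (x - z) - (f (x + z) - f x)| := by rw [secDiff]; ring_nf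
    _ ≤ C * ‖z‖ * ‖z‖ := hmv
    _ = C * ‖z‖ ^ 2 := by ring

end Kernels

section Integrability

variable {E : Type*} [NormedAddCommGroup E] [InnerProductSpace ℝ E] [MeasurableSpace E]
  [BorelSpace E] {s : ℝ}

@[fun_prop]
lemma measurable_fracKernel (s : ℝ) : Measurable (fracKernel (E := E) s) := by
  unfold fracKernel; fun_prop

@[fun_prop]
lemma measurable_rieszKernel (s : ℝ) : Measurable (rieszKernel (E := E) s) := by
  unfold rieszKernel; fun_prop

variable [FiniteDimensional ℝ E]

lemma integrable_fracKernel_mul_min [Nontrivial E] (hs0 : 0 < s) (hs1 : s < 1) :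
    Integrable fun z : E => fracKernel s z * min 1 (‖z‖ ^ 2) := by
  have hmeas : Measurable fun z : E => fracKernel s z * min 1 (‖z‖ ^ 2) := by fun_prop
  have hnorm (z : E) : ‖fracKernel s z * min 1 (‖z‖ ^ 2)‖ = fracKernel s z * min 1 (‖z‖ ^ 2) :=
    Real.norm_of_nonneg (mul_nonneg (fracKernel_nonneg s z) (by positivity))
  rw [← integrableOn_univ, ← union_compl_self (Metric.ball (0 : E) 1)]
  refine IntegrableOn.union ?_ ?_
  · refine integrableOn_ball_of_norm_le_rpow (C := 1) (α := finrank ℝ E + 2 * s - 2)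
      (Nat.succ_le_of_lt Module.finrank_pos) (by linarith) (ae_of_all _ fun z => ?_)
      hmeas.aestronglyMeasurable
    rcases eq_or_ne z 0 with rfl | hz
    · simp only [norm_zero, ne_eq, OfNat.ofNat_ne_zero, not_false_eq_true, zero_pow, zero_le_one,
        inf_of_le_right, mul_zero]
      positivity
    · rw [hnorm, one_mul, neg_sub, sub_eq_add_neg, Real.rpow_add (norm_pos_iff.2 hz), Real.rpow_two,
        mul_comm, fracKernel]
      gcongr
      exact min_le_right _ _
  · refine (((integrable_one_add_norm (r := finrank ℝ E + 2 * s) (by linarith)).const_mul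
      (2 ^ ((finrank ℝ E : ℝ) + 2 * s))).integrableOn).mono' hmeas.aestronglyMeasurable.restrict
      (ae_restrict_of_forall_mem Metric.isOpen_ball.measurableSet.compl fun z hz => ?_)
    have hz1 : 1 ≤ ‖z‖ := by simpa using hz
    rw [hnorm]
    calc fracKernel s z * min 1 (‖z‖ ^ 2) ≤ fracKernel s z * 1 := by
          gcongr
          exacts [fracKernel_nonneg s z, min_le_left _ _]
      _ ≤ ((1 + ‖z‖) / 2) ^ (-((finrank ℝ E : ℝ) + 2 * s)) := by
          rw [mul_one, fracKernel]
          exact Real.rpow_le_rpow_of_nonpos (by positivity) (by linarith)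
            (neg_nonpos.2 (by positivity))
      _ = 2 ^ ((finrank ℝ E : ℝ) + 2 * s) * (1 + ‖z‖) ^ (-((finrank ℝ E : ℝ) + 2 * s)) := by
          rw [Real.div_rpow (by positivity) zero_le_two, Real.rpow_neg zero_le_two, div_inv_eq_mul,
            mul_comm]

lemma locallyIntegrable_rieszKernel [Nontrivial E] (hs0 : 0 < s) :
    LocallyIntegrable (rieszKernel (E := E) s) := by
  refine locallyIntegrable_of_norm_le_rpow (C := 1) (α := finrank ℝ E - 2 * s)
    (Nat.succ_le_of_lt Module.finrank_pos) (by linarith) (ae_of_all _ fun x => ?_)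
    (measurable_rieszKernel s).aestronglyMeasurable
  rw [Real.norm_of_nonneg (rieszKernel_nonneg s x), one_mul, neg_sub, rieszKernel]

end Integrability

section FractionalLaplacian

variable {E : Type*} [NormedAddCommGroup E] [InnerProductSpace ℝ E] [FiniteDimensional ℝ E]
  [MeasurableSpace E] [BorelSpace E] {s r M : ℝ} {f : E → ℝ}

lemma fracLaplacian_comp_sub_right (s : ℝ) (f : E → ℝ) (a x : E) :
    fracLaplacian s (fun y => f (y - a)) x = fracLaplacian s f (x - a) := by
  simp only [fracLaplacian, secDiff_comp_sub_right]

lemma fracLaplacian_rieszDilation (hr : 0 < r) (f : E → ℝ) (x : E) :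
    fracLaplacian s (rieszDilation s r f) x
      = r ^ (-(finrank ℝ E : ℝ)) * fracLaplacian s f (r⁻¹ • x) := by
  have hexp : r ^ (-2 * (finrank ℝ E : ℝ)) * r ^ finrank ℝ E = r ^ (-(finrank ℝ E : ℝ)) := by
    rw [← Real.rpow_natCast, ← Real.rpow_add hr]; ring_nf
  simp_rw [fracLaplacian, fracKernel_mul_secDiff_rieszDilation hr, integral_const_mul]
  rw [Measure.integral_comp_inv_smul_of_nonneg volume
    (fun z => fracKernel s z * secDiff f (r⁻¹ • x) z) hr.le, smul_eq_mul, ← mul_assoc, hexp]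

/-- The Riesz kernel is invariant under rotations and under its dilations, so its fractional
Laplacian is homogeneous of degree `-n`. -/
lemma fracLaplacian_rieszKernel_eq {x e : E} (hx : x ≠ 0) (he : ‖e‖ = 1) :
    fracLaplacian s (rieszKernel s) x
      = fracLaplacian s (rieszKernel s) e * ‖x‖ ^ (-(finrank ℝ E : ℝ)) := by
  have hx0 : 0 < ‖x‖ := norm_pos_iff.2 hx
  have hscale := fracLaplacian_rieszDilation (s := s) hx0 (rieszKernel s) x
  rw [rieszDilation_rieszKernel hx0, mul_comm] at hscale
  rw [hscale]
  congr 1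
  have hnorm : ‖e‖ = ‖‖x‖⁻¹ • x‖ := by
    rw [he, norm_smul, norm_inv, norm_norm, inv_mul_cancel₀ hx0.ne']
  obtain ⟨R, hR⟩ : ∃ R : E ≃ₗᵢ[ℝ] E, R e = ‖x‖⁻¹ • x := ⟨_, Submodule.reflection_sub hnorm⟩
  rw [← hR, fracLaplacian, fracLaplacian,
    ← R.measurePreserving.integral_comp R.toHomeomorph.measurableEmbedding]
  simp only [secDiff, fracKernel, rieszKernel, ← map_add, ← map_sub, LinearIsometryEquiv.norm_map]

lemma integrable_fracKernel_mul_secDiff [Nontrivial E] (hs0 : 0 < s) (hs1 : s < 1)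
    (hf : Measurable f) (hM : ∀ x z, |secDiff f x z| ≤ M * min 1 (‖z‖ ^ 2)) (x : E) :
    Integrable fun z => fracKernel s z * secDiff f x z :=
  ((integrable_fracKernel_mul_min hs0 hs1).const_mul M).mono'
    (by fun_prop) (ae_of_all _ (abs_fracKernel_mul_secDiff_le hM x))

lemma exists_abs_fracLaplacian_le [Nontrivial E] (hs0 : 0 < s) (hs1 : s < 1)
    (hM : ∀ x z, |secDiff f x z| ≤ M * min 1 (‖z‖ ^ 2)) :
    ∃ B, ∀ x, |fracLaplacian s f x| ≤ B :=
  ⟨_, fun x => norm_integral_le_of_norm_le (f := fun z => fracKernel s z * secDiff f x z)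
    ((integrable_fracKernel_mul_min hs0 hs1).const_mul M)
    (ae_of_all _ (abs_fracKernel_mul_secDiff_le hM x))⟩

lemma integrable_fracKernel_mul_secDiff_prod [Nontrivial E] (hs0 : 0 < s) (hs1 : s < 1)
    (hf : ContDiff ℝ 2 f) (hc : HasCompactSupport f) :
    Integrable (fun p : E × E => fracKernel s p.2 * secDiff f p.1 p.2) (volume.prod volume) := by
  obtain ⟨M, hM0, hM⟩ := exists_abs_secDiff_le hf hc
  have hfc := hf.continuous
  have hχ : Integrable ((tsupport f).indicator (1 : E → ℝ)) :=
    (integrable_indicator_iff (isClosed_tsupport f).measurableSet).2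
      (integrableOn_const (C := (1 : ℝ)) hc.isCompact.measure_lt_top.ne)
  have hbase := hχ.mul_prod (integrable_fracKernel_mul_min (E := E) hs0 hs1)
  have hadd :=
    (measurePreserving_add_prod (volume : Measure E) volume).integrable_comp_of_integrable hbase
  have hsub :=
    (measurePreserving_sub_prod (volume : Measure E) volume).integrable_comp_of_integrable hbase
  refine (((hbase.add hadd).add hsub).const_mul M).mono' ?_
    (ae_of_all _ fun p => abs_fracKernel_mul_secDiff_le_indicator hM0 hM p.1 p.2)
  refine ((measurable_fracKernel s).comp measurable_snd).aestronglyMeasurable.mul ?_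
  unfold secDiff
  fun_prop

lemma integrable_fracLaplacian [Nontrivial E] (hs0 : 0 < s) (hs1 : s < 1)
    (hf : ContDiff ℝ 2 f) (hc : HasCompactSupport f) : Integrable (fracLaplacian s f) :=
  (integrable_fracKernel_mul_secDiff_prod hs0 hs1 hf hc).integral_prod_left

lemma integral_secDiff_eq_zero (hf : Integrable f) (z : E) : ∫ x, secDiff f x z = 0 := by
  have hsub : Integrable fun x => 2 * f x - f (x + z) := (hf.const_mul 2).sub (hf.comp_add_right z)
  simp_rw [secDiff]
  rw [integral_sub hsub (hf.comp_sub_right z),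
    integral_sub (hf.const_mul 2) (hf.comp_add_right z), integral_const_mul,
    integral_add_right_eq_self f z, integral_sub_right_eq_self f z]
  ring

lemma integral_fracLaplacian_eq_zero [Nontrivial E] (hs0 : 0 < s) (hs1 : s < 1)
    (hf : ContDiff ℝ 2 f) (hc : HasCompactSupport f) : ∫ x, fracLaplacian s f x = 0 := by
  simp_rw [fracLaplacian]
  rw [integral_integral_swap (integrable_fracKernel_mul_secDiff_prod hs0 hs1 hf hc)]
  simp only [integral_const_mul,
    integral_secDiff_eq_zero (hf.continuous.integrable_of_hasCompactSupport hc), mul_zero,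
    integral_zero]

end FractionalLaplacian

section Gagliardo

variable {E : Type*} [NormedAddCommGroup E] [InnerProductSpace ℝ E] [FiniteDimensional ℝ E]
  [MeasurableSpace E] [BorelSpace E] {s B : ℝ} {v f : E → ℝ}

lemma integral_difference_mul_difference (hv : AEStronglyMeasurable v) (hB : ∀ᵐ x, |v x| ≤ B)
    (hf : Integrable f) (z : E) :
    ∫ x, (v x - v (x + z)) * (f x - f (x + z)) = ∫ x, v x * secDiff f x z := by
  have hmul (g : E → ℝ) (hg : Integrable g) : Integrable fun x => v x * g x :=
    hg.bdd_mul hv (c := B) hB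
  have hforward : Integrable fun x => v x * (f x - f (x + z)) :=
    hmul _ (hf.sub (hf.comp_add_right z))
  have hbackward : Integrable fun x => v x * (f (x - z) - f x) :=
    hmul _ ((hf.comp_sub_right z).sub hf)
  have hshift : Integrable fun x => v (x + z) * (f x - f (x + z)) := by
    simpa only [add_sub_cancel_right] using hbackward.comp_add_right z
  have htranslate : ∫ x, v (x + z) * (f x - f (x + z)) = ∫ x, v x * (f (x - z) - f x) := by
    rw [← integral_add_right_eq_self (fun x => v x * (f (x - z) - f x)) z]
    simp only [add_sub_cancel_right]
  simp_rw [sub_mul]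
  rw [integral_sub hforward hshift, htranslate, ← integral_sub hforward hbackward]
  congr 1 with x
  rw [secDiff]
  ring

lemma integral_gagliardo_eq [Nontrivial E] (hs0 : 0 < s) (hs1 : s < 1) (hv : Measurable v)
    (hB : ∀ᵐ x, |v x| ≤ B) (hf : ContDiff ℝ 2 f) (hc : HasCompactSupport f)
    (hi : Integrable (fun p : E × E => fracKernel s (p.1 - p.2) *
      ((v p.1 - v p.2) * (f p.1 - f p.2))) (volume.prod volume)) :
    ∫ p : E × E, fracKernel s (p.1 - p.2) * ((v p.1 - v p.2) * (f p.1 - f p.2)) ∂volume.prod volume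
      = ∫ x, v x * fracLaplacian s f x := by
  have hfi : Integrable f := hf.continuous.integrable_of_hasCompactSupport hc
  have hshear := measurePreserving_prod_add (volume : Measure E) (volume : Measure E)
  have hemb : MeasurableEmbedding fun p : E × E => (p.1, p.1 + p.2) :=
    (MeasurableEquiv.shearAddRight E).measurableEmbedding
  have hprod : Integrable (fun p : E × E => v p.1 * (fracKernel s p.2 * secDiff f p.1 p.2))
      (volume.prod volume) :=
    (integrable_fracKernel_mul_secDiff_prod hs0 hs1 hf hc).bdd_mul
      (hv.comp measurable_fst).aestronglyMeasurable (c := B)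
      (Measure.quasiMeasurePreserving_fst.ae hB)
  rw [← hshear.integral_comp hemb]
  refine (integral_prod_symm _ ((hshear.integrable_comp_emb hemb).2 hi)).trans ?_
  calc ∫ z, ∫ x, fracKernel s (x - (x + z)) * ((v x - v (x + z)) * (f x - f (x + z)))
      = ∫ z, ∫ x, v x * (fracKernel s z * secDiff f x z) := by
        congr 1 with z
        simp only [sub_add_cancel_left, fracKernel, norm_neg, mul_left_comm (v _)]
        rw [integral_const_mul, integral_const_mul,
          integral_difference_mul_difference hv.aestronglyMeasurable hB hfi]
    _ = ∫ x, ∫ z, v x * (fracKernel s z * secDiff f x z) := (integral_integral_swap hprod).symm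
    _ = ∫ x, v x * fracLaplacian s f x := by simp only [integral_const_mul, fracLaplacian]

end Gagliardo

lemma fracKernel_euclideanSpace {d : ℕ} (s : ℝ) (z : Ed d) :
    fracKernel s z = (‖z‖ ^ ((d : ℝ) + 2 * s))⁻¹ := by
  rw [fracKernel, finrank_euclideanSpace_fin, Real.rpow_neg (norm_nonneg z)]

lemma neg_integral_le_gagliardoE {d : ℕ} [Nontrivial (Ed d)] {s κ B : ℝ} {v f w : Ed d → ℝ}
    (hs0 : 0 < s) (hs1 : s < 1) (hκ : 0 ≤ κ) (hv : Measurable v) (hv0 : ∀ x, 0 ≤ v x)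
    (hB : ∀ᵐ x, v x ≤ B) (hf : ContDiff ℝ 2 f) (hc : HasCompactSupport f) (hw0 : ∀ x, 0 ≤ w x)
    (hvw : Integrable fun x => v x * w x) (hfw : ∀ x, -w x ≤ fracLaplacian s f x) :
    -(κ / 2 * ∫ x, v x * w x) ≤ gagliardoE d s κ v f := by
  have hBv : ∀ᵐ x, |v x| ≤ B := hB.mono fun x hx => by rwa [abs_of_nonneg (hv0 x)]
  have hform (p : Ed d × Ed d) :
      (v p.1 - v p.2) * (f p.1 - f p.2) / ‖p.1 - p.2‖ ^ ((d : ℝ) + 2 * s)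
        = fracKernel s (p.1 - p.2) * ((v p.1 - v p.2) * (f p.1 - f p.2)) := by
    rw [fracKernel_euclideanSpace, div_eq_inv_mul]
  simp_rw [gagliardoE, hform]
  rw [← mul_neg]
  refine mul_le_mul_of_nonneg_left ?_ (by positivity)
  by_cases hi : Integrable fun p : Ed d × Ed d =>
      fracKernel s (p.1 - p.2) * ((v p.1 - v p.2) * (f p.1 - f p.2))
  · rw [Measure.volume_eq_prod, integral_gagliardo_eq hs0 hs1 hv hBv hf hc hi, ← integral_neg]
    refine integral_mono hvw.neg ?_ fun x => ?_
    · exact (integrable_fracLaplacian hs0 hs1 hf hc).bdd_mul hv.aestronglyMeasurable (c := B) hBv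
    · simpa only [mul_neg] using mul_le_mul_of_nonneg_left (hfw x) (hv0 x)
  · rw [integral_undef hi, neg_nonpos]
    exact integral_nonneg fun x => mul_nonneg (hv0 x) (hw0 x)

section ConcaveCutoff

/-- A smooth concave function equal to the identity on `(-∞,1]` and constant on `[2,∞)`. -/
def concaveCutoff (σ : ℝ) : ℝ := ∫ w in (0 : ℝ)..σ, Real.smoothTransition (2 - w)

lemma hasDerivAt_concaveCutoff (σ : ℝ) :
    HasDerivAt concaveCutoff (Real.smoothTransition (2 - σ)) σ :=
  ((Real.smoothTransition.continuous.comp (by fun_prop)).integral_hasStrictDerivAt 0 σ).hasDerivAt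

lemma differentiable_concaveCutoff : Differentiable ℝ concaveCutoff :=
  fun σ => (hasDerivAt_concaveCutoff σ).differentiableAt

lemma deriv_concaveCutoff : deriv concaveCutoff = fun σ => Real.smoothTransition (2 - σ) :=
  funext fun σ => (hasDerivAt_concaveCutoff σ).deriv

lemma contDiff_concaveCutoff : ContDiff ℝ (⊤ : ℕ∞) concaveCutoff := by
  rw [contDiff_infty_iff_deriv, deriv_concaveCutoff]
  exact ⟨differentiable_concaveCutoff, Real.smoothTransition.contDiff.comp (by fun_prop)⟩

lemma monotone_concaveCutoff : Monotone concaveCutoff :=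
  monotone_of_deriv_nonneg differentiable_concaveCutoff fun σ => by
    rw [deriv_concaveCutoff]; exact Real.smoothTransition.nonneg _

lemma concaveOn_concaveCutoff : ConcaveOn ℝ univ concaveCutoff := by
  refine AntitoneOn.concaveOn_of_deriv convex_univ
    differentiable_concaveCutoff.continuous.continuousOn
    differentiable_concaveCutoff.differentiableOn ?_
  rw [deriv_concaveCutoff]
  exact fun a _ b _ hab => Real.smoothTransition.monotone (by linarith)

lemma concaveCutoff_le_tangent (a b : ℝ) :
    concaveCutoff b ≤ concaveCutoff a + Real.smoothTransition (2 - a) * (b - a) := by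
  rcases lt_trichotomy a b with h | rfl | h
  · have := concaveOn_concaveCutoff.slope_le_of_hasDerivAt (mem_univ a) (mem_univ b) h
      (hasDerivAt_concaveCutoff a)
    rw [slope_def_field, div_le_iff₀ (sub_pos.2 h)] at this
    linarith
  · simp only [sub_self, mul_zero, add_zero, le_refl]
  · have := concaveOn_concaveCutoff.le_slope_of_hasDerivAt (mem_univ b) (mem_univ a) h
      (hasDerivAt_concaveCutoff a)
    rw [slope_def_field, le_div_iff₀ (sub_pos.2 h)] at this
    linarith

lemma concaveCutoff_zero : concaveCutoff 0 = 0 := intervalIntegral.integral_same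

lemma concaveCutoff_nonneg {σ : ℝ} (h : 0 ≤ σ) : 0 ≤ concaveCutoff σ :=
  concaveCutoff_zero ▸ monotone_concaveCutoff h

lemma concaveCutoff_le (σ : ℝ) : concaveCutoff σ ≤ σ := by
  simpa [concaveCutoff_zero, Real.smoothTransition.one_of_one_le] using concaveCutoff_le_tangent 0 σ

lemma concaveCutoff_of_le_one {σ : ℝ} (h : σ ≤ 1) : concaveCutoff σ = σ := by
  have := concaveCutoff_le_tangent σ 0
  rw [concaveCutoff_zero, Real.smoothTransition.one_of_one_le (by linarith)] at this
  linarith [concaveCutoff_le σ]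

lemma concaveCutoff_le_two (σ : ℝ) : concaveCutoff σ ≤ concaveCutoff 2 := by
  simpa using concaveCutoff_le_tangent 2 σ

lemma concaveCutoff_of_two_le {σ : ℝ} (h : 2 ≤ σ) : concaveCutoff σ = concaveCutoff 2 :=
  (concaveCutoff_le_two σ).antisymm (monotone_concaveCutoff h)

end ConcaveCutoff

section TruncatedKernel

variable {E : Type*} [NormedAddCommGroup E] [InnerProductSpace ℝ E] {s r R : ℝ}

open Classical in
/-- The Riesz kernel smoothly truncated at its singularity: it agrees with the kernel outside the
unit ball. The value at the origin is assigned separately because `0 ^ (2 * s - n) = 0`. -/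
def unitTruncRiesz (s : ℝ) (x : E) : ℝ :=
  if x = 0 then concaveCutoff 2 else concaveCutoff (rieszKernel s x)

/-- The truncation of the Riesz kernel at scale `r`: it agrees with the kernel outside the ball of
radius `r`. -/
def truncRiesz (s r : ℝ) (x : E) : ℝ := rieszDilation s r (unitTruncRiesz s) x

/-- The difference of two truncations of the Riesz kernel, a smooth compactly supported
approximation of the Riesz kernel. -/
def rieszTest (s r R : ℝ) (x : E) : ℝ := truncRiesz s r x - truncRiesz s R x

lemma unitTruncRiesz_of_ne_zero (s : ℝ) {x : E} (hx : x ≠ 0) :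
    unitTruncRiesz s x = concaveCutoff (rieszKernel s x) := if_neg hx

lemma unitTruncRiesz_nonneg (s : ℝ) (x : E) : 0 ≤ unitTruncRiesz s x := by
  unfold unitTruncRiesz
  split_ifs
  exacts [concaveCutoff_nonneg zero_le_two, concaveCutoff_nonneg (rieszKernel_nonneg s x)]

lemma unitTruncRiesz_le_concaveCutoff_two (s : ℝ) (x : E) :
    unitTruncRiesz s x ≤ concaveCutoff 2 := by
  unfold unitTruncRiesz
  split_ifs
  exacts [le_rfl, concaveCutoff_le_two _]

lemma unitTruncRiesz_le_rieszKernel (s : ℝ) {x : E} (hx : x ≠ 0) :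
    unitTruncRiesz s x ≤ rieszKernel s x :=
  (unitTruncRiesz_of_ne_zero s hx).trans_le (concaveCutoff_le _)

lemma unitTruncRiesz_eq_rieszKernel (hn : 2 * s < finrank ℝ E) {x : E} (hx : 1 ≤ ‖x‖) :
    unitTruncRiesz s x = rieszKernel s x := by
  rw [unitTruncRiesz_of_ne_zero s (norm_pos_iff.1 (one_pos.trans_le hx))]
  exact concaveCutoff_of_le_one (Real.rpow_le_one_of_one_le_of_nonpos hx (by linarith))

lemma unitTruncRiesz_eventuallyEq_const (hn : 2 * s < finrank ℝ E) :
    unitTruncRiesz s =ᶠ[𝓝 (0 : E)] fun _ => concaveCutoff 2 := by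
  have hlim : Tendsto (rieszKernel s) (𝓝[≠] (0 : E)) atTop :=
    (tendsto_rpow_neg_nhdsGT_zero (sub_neg.2 hn)).comp tendsto_norm_nhdsNE_zero
  filter_upwards [eventually_nhdsWithin_iff.1 (hlim.eventually_ge_atTop 2)] with x hx
  unfold unitTruncRiesz
  split_ifs with h
  exacts [rfl, concaveCutoff_of_two_le (hx h)]

lemma contDiff_unitTruncRiesz (hn : 2 * s < finrank ℝ E) :
    ContDiff ℝ (⊤ : ℕ∞) (unitTruncRiesz (E := E) s) := by
  refine contDiff_iff_contDiffAt.2 fun x => ?_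
  rcases eq_or_ne x 0 with rfl | hx
  · exact contDiffAt_const.congr_of_eventuallyEq (unitTruncRiesz_eventuallyEq_const hn)
  · have hker : ContDiffAt ℝ (⊤ : ℕ∞) (rieszKernel s) x :=
      (contDiffAt_norm ℝ hx).rpow_const_of_ne (norm_ne_zero_iff.2 hx)
    refine (contDiff_concaveCutoff.contDiffAt.comp x hker).congr_of_eventuallyEq ?_
    filter_upwards [isOpen_ne.mem_nhds hx] with y hy using unitTruncRiesz_of_ne_zero s hy

lemma truncRiesz_one (s : ℝ) : truncRiesz s 1 = unitTruncRiesz (E := E) s := by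
  funext x
  rw [truncRiesz, rieszDilation, Real.one_rpow, one_mul, inv_one, one_smul]

lemma truncRiesz_nonneg (s : ℝ) (hr : 0 < r) (x : E) : 0 ≤ truncRiesz s r x :=
  mul_nonneg (by positivity) (unitTruncRiesz_nonneg s _)

lemma truncRiesz_le (s : ℝ) (hr : 0 < r) (x : E) :
    truncRiesz s r x ≤ r ^ (2 * s - (finrank ℝ E : ℝ)) * 2 :=
  mul_le_mul_of_nonneg_left
    ((unitTruncRiesz_le_concaveCutoff_two s _).trans (concaveCutoff_le 2)) (by positivity)

lemma truncRiesz_le_rieszKernel (s : ℝ) (hr : 0 < r) {x : E} (hx : x ≠ 0) :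
    truncRiesz s r x ≤ rieszKernel s x := by
  rw [← rieszDilation_rieszKernel hr]
  exact mul_le_mul_of_nonneg_left
    (unitTruncRiesz_le_rieszKernel s (smul_ne_zero (inv_ne_zero hr.ne') hx)) (by positivity)

lemma truncRiesz_eq_rieszKernel (hn : 2 * s < finrank ℝ E) (hr : 0 < r) {x : E} (hx : r ≤ ‖x‖) :
    truncRiesz s r x = rieszKernel s x := by
  rw [← rieszDilation_rieszKernel hr, truncRiesz, rieszDilation, rieszDilation,
    unitTruncRiesz_eq_rieszKernel hn]
  rwa [norm_smul, norm_inv, Real.norm_of_nonneg hr.le, inv_mul_eq_div, one_le_div hr]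

lemma contDiff_truncRiesz (hn : 2 * s < finrank ℝ E) (r : ℝ) :
    ContDiff ℝ (⊤ : ℕ∞) (truncRiesz (E := E) s r) :=
  contDiff_const.mul ((contDiff_unitTruncRiesz hn).comp (contDiff_const_smul _))

lemma continuous_truncRiesz (hn : 2 * s < finrank ℝ E) (r : ℝ) :
    Continuous (truncRiesz (E := E) s r) :=
  (contDiff_truncRiesz hn r).continuous

lemma contDiff_rieszTest (hn : 2 * s < finrank ℝ E) (r R : ℝ) :
    ContDiff ℝ (⊤ : ℕ∞) (rieszTest (E := E) s r R) :=
  (contDiff_truncRiesz hn r).sub (contDiff_truncRiesz hn R)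

lemma hasCompactSupport_rieszTest [FiniteDimensional ℝ E] (hn : 2 * s < finrank ℝ E) (hr : 0 < r)
    (hR : 0 < R) : HasCompactSupport (rieszTest (E := E) s r R) := by
  refine HasCompactSupport.intro (isCompact_closedBall (0 : E) (max r R)) fun x hx => ?_
  have hx : max r R < ‖x‖ := by simpa using hx
  rw [rieszTest, truncRiesz_eq_rieszKernel hn hr ((le_max_left _ _).trans hx.le),
    truncRiesz_eq_rieszKernel hn hR ((le_max_right _ _).trans hx.le), sub_self]

/-- The error committed by truncating the Riesz kernel at scale `r`. -/
def truncError (s r : ℝ) (x : E) : ℝ := rieszKernel s x - truncRiesz s r x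

lemma truncError_eq_zero (hn : 2 * s < finrank ℝ E) (hr : 0 < r) {x : E} (hx : r ≤ ‖x‖) :
    truncError s r x = 0 := by
  rw [truncError, truncRiesz_eq_rieszKernel hn hr hx, sub_self]

lemma norm_fracKernel_mul_truncError_le (hs0 : 0 < s) (hn : 2 * s < finrank ℝ E) (hr : 0 < r)
    {x : E} (hx : 2 * r ≤ ‖x‖) (z : E) :
    ‖fracKernel s z * truncError s r (x + z)‖
      ≤ (‖x‖ / 2) ^ (-((finrank ℝ E : ℝ) + 2 * s)) * |truncError s r (x + z)| := by
  rw [norm_mul, Real.norm_of_nonneg (fracKernel_nonneg s z), Real.norm_eq_abs]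
  rcases le_total r ‖x + z‖ with h | h
  · rw [truncError_eq_zero hn hr h, abs_zero, mul_zero, mul_zero]
  · have htri : ‖x‖ ≤ ‖x + z‖ + ‖z‖ := by simpa using norm_sub_le (x + z) z
    exact mul_le_mul_of_nonneg_right (Real.rpow_le_rpow_of_nonpos (by linarith) (by linarith)
      (neg_nonpos.2 (by positivity))) (abs_nonneg _)

lemma secDiff_rieszKernel_eq (hn : 2 * s < finrank ℝ E) (hr : 0 < r) {x : E} (hx : r ≤ ‖x‖)
    (z : E) : secDiff (rieszKernel s) x z
      = secDiff (truncRiesz s r) x z - (truncError s r (x + z) + truncError s r (x + -z)) := by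
  simp only [secDiff, truncError, truncRiesz_eq_rieszKernel hn hr hx, ← sub_eq_add_neg]
  ring

lemma mul_secDiff_rieszKernel_le {x z : E} (hx : x ≠ 0) (hz₁ : z ≠ x) (hz₂ : z ≠ -x) :
    Real.smoothTransition (2 - rieszKernel s x) * secDiff (rieszKernel s) x z
      ≤ secDiff (unitTruncRiesz s) x z := by
  have hadd : x + z ≠ 0 := fun h => hz₂ (eq_neg_of_add_eq_zero_right h)
  simp only [secDiff, unitTruncRiesz_of_ne_zero s hx, unitTruncRiesz_of_ne_zero s hadd,
    unitTruncRiesz_of_ne_zero s (sub_ne_zero.2 hz₁.symm)]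
  linarith [concaveCutoff_le_tangent (rieszKernel s x) (rieszKernel s (x + z)),
    concaveCutoff_le_tangent (rieszKernel s x) (rieszKernel s (x - z))]

lemma nonpos_of_le_mul_comp {α : Type*} {h : α → ℝ} {φ : α → α} {q A : ℝ} (hq0 : 0 ≤ q)
    (hq1 : q < 1) (hA : ∀ a, h a ≤ A) (hφ : ∀ a, h a ≤ q * h (φ a)) (a : α) : h a ≤ 0 := by
  have hpow (N : ℕ) : ∀ a, h a ≤ q ^ N * A := by
    induction N with
    | zero => simpa using hA
    | succ N ih =>
      intro a
      rw [pow_succ', mul_assoc]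
      exact (hφ a).trans (mul_le_mul_of_nonneg_left (ih _) hq0)
  have hlim := (tendsto_pow_atTop_nhds_zero_of_lt_one hq0 hq1).mul_const A
  rw [zero_mul] at hlim
  exact ge_of_tendsto' hlim fun N => hpow N a

/-- The two-scale relation `T = rieszTest 1 2 + T₂`, whose last term contracts both the values and
the second differences, transfers the bound from the compactly supported `rieszTest`. -/
lemma exists_abs_secDiff_unitTruncRiesz_le [FiniteDimensional ℝ E] (hn : 2 * s < finrank ℝ E) :
    ∃ M, ∀ x z : E, |secDiff (unitTruncRiesz s) x z| ≤ M * min 1 (‖z‖ ^ 2) := by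
  obtain ⟨C, hC0, hC⟩ := exists_abs_secDiff_le
    (contDiff_infty.1 (contDiff_rieszTest (E := E) hn 1 2) 2)
    (hasCompactSupport_rieszTest hn one_pos two_pos)
  set q : ℝ := 2 ^ (2 * s - (finrank ℝ E : ℝ))
  have hq0 : 0 ≤ q := by positivity
  have hq1 : q < 1 := Real.rpow_lt_one_of_one_lt_of_neg one_lt_two (by linarith)
  have htwoScale (x z : E) : secDiff (unitTruncRiesz s) x z = secDiff (rieszTest s 1 2) x z
      + q * secDiff (unitTruncRiesz s) ((2 : ℝ)⁻¹ • x) ((2 : ℝ)⁻¹ • z) := by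
    rw [← secDiff_rieszDilation]
    simp only [secDiff, rieszTest, truncRiesz_one]
    simp only [truncRiesz]
    ring
  have hbound (x : E) : |unitTruncRiesz s x| ≤ 2 := by
    rw [abs_of_nonneg (unitTruncRiesz_nonneg s x)]
    exact (unitTruncRiesz_le_concaveCutoff_two s x).trans (concaveCutoff_le 2)
  have hexcess := nonpos_of_le_mul_comp (q := q) (A := 4 * 2)
    (h := fun p : E × E => |secDiff (unitTruncRiesz s) p.1 p.2| - 4 / 3 * C * ‖p.2‖ ^ 2)
    (φ := fun p => ((2 : ℝ)⁻¹ • p.1, (2 : ℝ)⁻¹ • p.2)) hq0 hq1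
    (fun p => (sub_le_self _ (by positivity)).trans (abs_secDiff_le_of_abs_le hbound p.1 p.2))
    fun p => by
      have hhalf : ‖(2 : ℝ)⁻¹ • p.2‖ = 2⁻¹ * ‖p.2‖ := by
        rw [norm_smul, Real.norm_of_nonneg (by norm_num)]
      have hC' : |secDiff (rieszTest s 1 2) p.1 p.2| ≤ C * ‖p.2‖ ^ 2 :=
        (hC _ _).trans (mul_le_mul_of_nonneg_left (min_le_right _ _) hC0)
      have htri := abs_add_le (secDiff (rieszTest s 1 2) p.1 p.2)
        (q * secDiff (unitTruncRiesz s) ((2 : ℝ)⁻¹ • p.1) ((2 : ℝ)⁻¹ • p.2))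
      rw [← htwoScale, abs_mul, abs_of_nonneg hq0] at htri
      rw [hhalf]
      have : q * (C * ‖p.2‖ ^ 2) ≤ 1 * (C * ‖p.2‖ ^ 2) := by gcongr
      linarith
  exact ⟨_, abs_secDiff_le_max_mul_min hbound fun x z => sub_nonpos.1 (hexcess (x, z))⟩

end TruncatedKernel

section Superharmonicity

variable {E : Type*} [NormedAddCommGroup E] [InnerProductSpace ℝ E] [FiniteDimensional ℝ E]
  [MeasurableSpace E] [BorelSpace E] {s r R γ : ℝ}

lemma measurable_fracLaplacian {f : E → ℝ} (hf : Measurable f) :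
    Measurable (fracLaplacian s f) := by
  have hint : Measurable fun p : E × E => fracKernel s p.2 * secDiff f p.1 p.2 := by
    unfold secDiff; fun_prop
  exact hint.stronglyMeasurable.integral_prod_right'.measurable

lemma measureReal_annulus_mul (hR : 0 < R) :
    (volume : Measure E).real (Metric.closedBall 0 (2 * R) \ Metric.closedBall 0 R)
        * (2 * R) ^ (-(finrank ℝ E : ℝ))
      = (1 - 2 ^ (-(finrank ℝ E : ℝ))) * (volume : Measure E).real (Metric.closedBall 0 1) := by
  rw [measureReal_sdiff (Metric.closedBall_subset_closedBall (by linarith))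
      Metric.isClosed_closedBall.measurableSet measure_closedBall_lt_top.ne,
    Measure.addHaar_real_closedBall' volume 0 hR.le,
    Measure.addHaar_real_closedBall' volume 0 (by positivity : (0 : ℝ) ≤ 2 * R),
    Real.rpow_neg (by positivity), Real.rpow_neg (by positivity), Real.rpow_natCast,
    Real.rpow_natCast, mul_pow]
  field_simp

lemma setIntegral_annulus_le {f : E → ℝ} {a : ℝ} (ha : a ≤ 0) (hR : 0 < R)
    (hf : IntegrableOn f (Metric.closedBall 0 (2 * R) \ Metric.closedBall 0 R))
    (hfa : ∀ x, R ≤ ‖x‖ → f x ≤ a * ‖x‖ ^ (-(finrank ℝ E : ℝ))) :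
    ∫ x in Metric.closedBall 0 (2 * R) \ Metric.closedBall 0 R, f x
      ≤ a * ((1 - 2 ^ (-(finrank ℝ E : ℝ)))
        * (volume : Measure E).real (Metric.closedBall 0 1)) := by
  have hfin : volume (Metric.closedBall (0 : E) (2 * R) \ Metric.closedBall 0 R) ≠ ∞ :=
    ((measure_mono sdiff_subset).trans_lt measure_closedBall_lt_top).ne
  calc ∫ x in Metric.closedBall 0 (2 * R) \ Metric.closedBall 0 R, f x
      ≤ ∫ _ in Metric.closedBall (0 : E) (2 * R) \ Metric.closedBall 0 R,
          a * (2 * R) ^ (-(finrank ℝ E : ℝ)) := by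
        refine setIntegral_mono_on hf (integrableOn_const hfin)
          (Metric.isClosed_closedBall.measurableSet.diff Metric.isClosed_closedBall.measurableSet)
          fun x hx => ?_
        have hlower : R < ‖x‖ := by simpa using hx.2
        refine (hfa x hlower.le).trans (mul_le_mul_of_nonpos_left ?_ ha)
        exact Real.rpow_le_rpow_of_nonpos (hR.trans hlower) (by simpa using hx.1) (by simp)
    _ = a * ((1 - 2 ^ (-(finrank ℝ E : ℝ)))
          * (volume : Measure E).real (Metric.closedBall 0 1)) := by
        rw [setIntegral_const, smul_eq_mul, mul_left_comm, measureReal_annulus_mul hR]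

variable [Nontrivial E]

lemma integrable_fracKernel_mul_secDiff_truncRiesz (hs0 : 0 < s) (hs1 : s < 1)
    (hn : 2 * s < finrank ℝ E) (hr : 0 < r) (x : E) :
    Integrable fun z => fracKernel s z * secDiff (truncRiesz s r) x z := by
  obtain ⟨M, hM⟩ := exists_abs_secDiff_unitTruncRiesz_le (E := E) hn
  have hunit := integrable_fracKernel_mul_secDiff hs0 hs1
    (contDiff_unitTruncRiesz hn).continuous.measurable hM (r⁻¹ • x)
  exact ((hunit.comp_smul (inv_ne_zero hr.ne')).const_mul _).congr
    (ae_of_all _ fun z => (fracKernel_mul_secDiff_rieszDilation hr _ x z).symm)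

lemma fracLaplacian_rieszTest (hs0 : 0 < s) (hs1 : s < 1) (hn : 2 * s < finrank ℝ E) (hr : 0 < r)
    (hR : 0 < R) (x : E) :
    fracLaplacian s (rieszTest s r R) x
      = r ^ (-(finrank ℝ E : ℝ)) * fracLaplacian s (unitTruncRiesz s) (r⁻¹ • x)
        - R ^ (-(finrank ℝ E : ℝ)) * fracLaplacian s (unitTruncRiesz s) (R⁻¹ • x) := by
  rw [← fracLaplacian_rieszDilation hr, ← fracLaplacian_rieszDilation hR]
  refine Eq.trans ?_ (integral_sub
    (integrable_fracKernel_mul_secDiff_truncRiesz hs0 hs1 hn hr x)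
    (integrable_fracKernel_mul_secDiff_truncRiesz hs0 hs1 hn hR x))
  refine integral_congr_ae (ae_of_all _ fun z => ?_)
  simp only [secDiff, rieszTest, truncRiesz]
  ring

lemma integrable_truncError (hs0 : 0 < s) (hn : 2 * s < finrank ℝ E) (hr : 0 < r) :
    Integrable (truncError (E := E) s r) := by
  rw [← integrableOn_iff_integrable_of_support_subset (s := Metric.closedBall 0 r)]
  · have hcompact := isCompact_closedBall (0 : E) r
    exact ((locallyIntegrable_rieszKernel hs0).integrableOn_isCompact hcompact).sub
      ((continuous_truncRiesz hn r).continuousOn.integrableOn_compact hcompact)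
  · intro x hx
    by_contra h
    exact hx (truncError_eq_zero hn hr (by simpa using (not_le.1 (by simpa using h)).le))

lemma integrable_fracKernel_mul_truncError (hs0 : 0 < s) (hn : 2 * s < finrank ℝ E) (hr : 0 < r)
    {x : E} (hx : 2 * r ≤ ‖x‖) :
    Integrable fun z => fracKernel s z * truncError s r (x + z) :=
  (((integrable_truncError hs0 hn hr).comp_add_left x).abs.const_mul _).mono'
    ((measurable_fracKernel s).aestronglyMeasurable.mul
      ((integrable_truncError hs0 hn hr).comp_add_left x).aestronglyMeasurable)
    (ae_of_all _ (norm_fracKernel_mul_truncError_le hs0 hn hr hx))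

lemma integral_fracKernel_mul_truncError_le (hs0 : 0 < s) (hn : 2 * s < finrank ℝ E) (hr : 0 < r)
    {x : E} (hx : 2 * r ≤ ‖x‖) :
    ∫ z, fracKernel s z * truncError s r (x + z)
      ≤ (‖x‖ / 2) ^ (-((finrank ℝ E : ℝ) + 2 * s)) * ∫ y : E, |truncError s r y| := by
  have h := norm_integral_le_of_norm_le
    (((integrable_truncError hs0 hn hr).comp_add_left x).abs.const_mul _)
    (ae_of_all _ (norm_fracKernel_mul_truncError_le hs0 hn hr hx))
  rw [integral_const_mul, integral_add_left_eq_self (fun y => |truncError s r y|) x] at h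
  exact (le_abs_self _).trans h

lemma integrable_fracKernel_mul_truncError_add (hs0 : 0 < s) (hn : 2 * s < finrank ℝ E)
    (hr : 0 < r) {x : E} (hx : 2 * r ≤ ‖x‖) :
    Integrable fun z => fracKernel s z * (truncError s r (x + z) + truncError s r (x + -z)) := by
  have h := integrable_fracKernel_mul_truncError hs0 hn hr hx
  refine (h.add h.comp_neg).congr (ae_of_all _ fun z => ?_)
  simp only [Pi.add_apply, fracKernel_neg, mul_add]

lemma integrable_fracKernel_mul_secDiff_rieszKernel (hs0 : 0 < s) (hs1 : s < 1)
    (hn : 2 * s < finrank ℝ E) {x : E} (hx : x ≠ 0) :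
    Integrable fun z => fracKernel s z * secDiff (rieszKernel s) x z := by
  have hx0 : 0 < ‖x‖ := norm_pos_iff.2 hx
  refine ((integrable_fracKernel_mul_secDiff_truncRiesz hs0 hs1 hn (half_pos hx0) x).sub
    (integrable_fracKernel_mul_truncError_add hs0 hn (half_pos hx0) (x := x) (by linarith))).congr
    (ae_of_all _ fun z => ?_)
  simp only [Pi.sub_apply, secDiff_rieszKernel_eq hn (half_pos hx0) (half_le_self hx0.le) z,
    mul_sub]

lemma fracLaplacian_truncRiesz_le (hs0 : 0 < s) (hs1 : s < 1) (hn : 2 * s < finrank ℝ E)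
    (hr : 0 < r) {x : E} (hx : 2 * r ≤ ‖x‖) :
    fracLaplacian s (truncRiesz s r) x ≤ fracLaplacian s (rieszKernel s) x
      + 2 * ((‖x‖ / 2) ^ (-((finrank ℝ E : ℝ) + 2 * s)) * ∫ y : E, |truncError s r y|) := by
  have hint := integrable_fracKernel_mul_truncError hs0 hn hr hx
  have hneg : ∫ z, fracKernel s z * truncError s r (x + -z)
      = ∫ z, fracKernel s z * truncError s r (x + z) := by
    simpa only [fracKernel_neg]
      using integral_neg_eq_self (fun z => fracKernel s z * truncError s r (x + z)) volume
  have hsplit : fracLaplacian s (rieszKernel s) x = fracLaplacian s (truncRiesz s r) x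
      - 2 * ∫ z, fracKernel s z * truncError s r (x + z) := by
    simp only [fracLaplacian, secDiff_rieszKernel_eq hn hr (by linarith : r ≤ ‖x‖), mul_sub]
    rw [integral_sub (integrable_fracKernel_mul_secDiff_truncRiesz hs0 hs1 hn hr x)
      (integrable_fracKernel_mul_truncError_add hs0 hn hr hx)]
    simp only [mul_add]
    rw [integral_add hint (by simpa only [fracKernel_neg] using hint.comp_neg), hneg, two_mul]
  linarith [integral_fracKernel_mul_truncError_le hs0 hn hr hx]

lemma exists_fracLaplacian_unitTruncRiesz_le_far (hs0 : 0 < s) (hs1 : s < 1)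
    (hn : 2 * s < finrank ℝ E) {e : E} (he : ‖e‖ = 1) :
    ∃ M, 0 ≤ M ∧ ∀ x : E, 2 ≤ ‖x‖ → fracLaplacian s (unitTruncRiesz s) x ≤
      (fracLaplacian s (rieszKernel s) e + M * ‖x‖ ^ (-(2 * s))) * ‖x‖ ^ (-(finrank ℝ E : ℝ)) := by
  refine ⟨2 * ((1 / 2) ^ (-((finrank ℝ E : ℝ) + 2 * s)) * ∫ y : E, |truncError s 1 y|),
    by positivity, fun x hx => ?_⟩
  have hx0 : 0 < ‖x‖ := by linarith
  have h := fracLaplacian_truncRiesz_le hs0 hs1 hn one_pos (x := x) (by linarith)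
  rw [truncRiesz_one, fracLaplacian_rieszKernel_eq (norm_pos_iff.1 hx0) he] at h
  refine h.trans_eq ?_
  rw [div_eq_mul_one_div, Real.mul_rpow (norm_nonneg _) (by norm_num), neg_add,
    Real.rpow_add hx0]
  ring

lemma exists_abs_fracLaplacian_unitTruncRiesz_le (hs0 : 0 < s) (hs1 : s < 1)
    (hn : 2 * s < finrank ℝ E) : ∃ B, ∀ x : E, |fracLaplacian s (unitTruncRiesz s) x| ≤ B :=
  have ⟨_, hM⟩ := exists_abs_secDiff_unitTruncRiesz_le (E := E) hn
  exists_abs_fracLaplacian_le hs0 hs1 hM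

lemma integrableOn_fracLaplacian_unitTruncRiesz_comp (hs0 : 0 < s) (hs1 : s < 1)
    (hn : 2 * s < finrank ℝ E) {g : E → E} (hg : Measurable g) {S : Set E} (hS : volume S ≠ ∞) :
    IntegrableOn (fun x => fracLaplacian s (unitTruncRiesz s) (g x)) S := by
  obtain ⟨B, hB⟩ := exists_abs_fracLaplacian_unitTruncRiesz_le (E := E) hs0 hs1 hn
  have hmeas := measurable_fracLaplacian (s := s)
    (contDiff_unitTruncRiesz (E := E) hn).continuous.measurable
  exact Measure.integrableOn_of_bounded (M := B) hS (hmeas.comp hg).aestronglyMeasurable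
    (ae_of_all _ fun x => hB (g x))

/-- The two terms of `rieszTest s 1 2` are dilates of each other, so their contributions cancel on
the smaller ball. -/
lemma setIntegral_fracLaplacian_rieszTest (hs0 : 0 < s) (hs1 : s < 1) (hn : 2 * s < finrank ℝ E)
    (hR : 0 < R) :
    ∫ x in Metric.closedBall (0 : E) (2 * R), fracLaplacian s (rieszTest s 1 2) x
      = ∫ x in Metric.closedBall (0 : E) (2 * R) \ Metric.closedBall 0 R,
        fracLaplacian s (unitTruncRiesz s) x := by
  have hint (ρ : ℝ) : IntegrableOn (fracLaplacian s (unitTruncRiesz s))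
      (Metric.closedBall (0 : E) ρ) :=
    integrableOn_fracLaplacian_unitTruncRiesz_comp hs0 hs1 hn measurable_id
      measure_closedBall_lt_top.ne
  have hint₂ : IntegrableOn (fun x : E => fracLaplacian s (unitTruncRiesz s) ((2 : ℝ)⁻¹ • x))
      (Metric.closedBall 0 (2 * R)) :=
    integrableOn_fracLaplacian_unitTruncRiesz_comp hs0 hs1 hn (measurable_const_smul _)
      measure_closedBall_lt_top.ne
  have hscale := Measure.setIntegral_comp_smul_of_pos (volume : Measure E)
    (fracLaplacian s (unitTruncRiesz s)) (Metric.closedBall 0 (2 * R)) (inv_pos.2 two_pos)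
  rw [_root_.smul_closedBall' (by norm_num), smul_zero, Real.norm_of_nonneg (by norm_num),
    inv_mul_cancel_left₀ two_ne_zero] at hscale
  simp only [fracLaplacian_rieszTest hs0 hs1 hn one_pos two_pos, Real.one_rpow, inv_one, one_smul,
    one_mul]
  rw [integral_sub (hint _) (hint₂.const_mul _), integral_const_mul, hscale,
    setIntegral_sdiff Metric.isClosed_closedBall.measurableSet (hint _)
      (Metric.closedBall_subset_closedBall (by linarith)), smul_eq_mul, Real.rpow_neg two_pos.le,
    Real.rpow_natCast, inv_pow, inv_inv, inv_mul_cancel_left₀ (by positivity)]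

lemma tendsto_setIntegral_fracLaplacian_annulus (hs0 : 0 < s) (hs1 : s < 1)
    (hn : 2 * s < finrank ℝ E) :
    Tendsto (fun R : ℝ => ∫ x in Metric.closedBall (0 : E) (2 * R) \ Metric.closedBall 0 R,
      fracLaplacian s (unitTruncRiesz s) x) atTop (𝓝 0) := by
  have hf : ContDiff ℝ 2 (rieszTest (E := E) s 1 2) :=
    contDiff_infty.1 (contDiff_rieszTest hn 1 2) 2
  have hc := hasCompactSupport_rieszTest (E := E) hn one_pos two_pos
  have hcover : AECover (volume : Measure E) atTop fun R : ℝ => Metric.closedBall (0 : E) (2 * R) :=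
    aecover_closedBall (tendsto_id.const_mul_atTop two_pos)
  have hlim := hcover.integral_tendsto_of_countably_generated
    (integrable_fracLaplacian hs0 hs1 hf hc)
  rw [integral_fracLaplacian_eq_zero hs0 hs1 hf hc] at hlim
  refine hlim.congr' ?_
  filter_upwards [eventually_gt_atTop 0] with R hR
    using setIntegral_fracLaplacian_rieszTest hs0 hs1 hn hR

/-- Otherwise the fractional Laplacian of the truncation would be at most a negative multiple of
`‖x‖ ^ (-n)` at infinity, and its integral over large dyadic annuli could not tend to `0`. -/
lemma fracLaplacian_rieszKernel_nonneg (hs0 : 0 < s) (hs1 : s < 1) (hn : 2 * s < finrank ℝ E)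
    {x : E} (hx : x ≠ 0) : 0 ≤ fracLaplacian s (rieszKernel s) x := by
  obtain ⟨e, he⟩ := exists_norm_eq E zero_le_one
  rw [fracLaplacian_rieszKernel_eq hx he]
  suffices 0 ≤ fracLaplacian s (rieszKernel s) e by positivity
  by_contra! hneg
  set c := fracLaplacian s (rieszKernel s) e
  obtain ⟨M, hM0, hM⟩ := exists_fracLaplacian_unitTruncRiesz_le_far hs0 hs1 hn he
  have hmass : 0 < (1 - 2 ^ (-(finrank ℝ E : ℝ)))
      * (volume : Measure E).real (Metric.closedBall 0 1) :=
    mul_pos (sub_pos.2 (Real.rpow_lt_one_of_one_lt_of_neg one_lt_two (by linarith)))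
      (ENNReal.toReal_pos
      (Metric.measure_closedBall_pos _ _ one_pos).ne' measure_closedBall_lt_top.ne)
  have hdecay : Tendsto (fun R : ℝ => M * R ^ (-(2 * s))) atTop (𝓝 0) := by
    simpa using (tendsto_rpow_neg_atTop (by linarith : 0 < 2 * s)).const_mul M
  obtain ⟨R, hR2, hRM, hRint⟩ := ((eventually_ge_atTop (2 : ℝ)).and
    ((hdecay.eventually_le_const (by linarith : 0 < -c / 2)).and
      ((tendsto_setIntegral_fracLaplacian_annulus hs0 hs1 hn).eventually_const_lt
        (mul_neg_of_neg_of_pos (by linarith : c / 2 < 0) hmass)))).exists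
  refine hRint.not_ge (setIntegral_annulus_le (by linarith) (by linarith)
    (integrableOn_fracLaplacian_unitTruncRiesz_comp hs0 hs1 hn measurable_id
      ((measure_mono sdiff_subset).trans_lt measure_closedBall_lt_top).ne) fun y hy => ?_)
  refine (hM y (hR2.trans hy)).trans (mul_le_mul_of_nonneg_right ?_ (by positivity))
  have hmono : M * ‖y‖ ^ (-(2 * s)) ≤ M * R ^ (-(2 * s)) :=
    mul_le_mul_of_nonneg_left (Real.rpow_le_rpow_of_nonpos (by linarith) hy (by linarith)) hM0
  linarith

/-- Concave functions of superharmonic functions are superharmonic; the origin, where the Riesz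
kernel is infinite, is a maximum of the truncation. -/
lemma fracLaplacian_unitTruncRiesz_nonneg (hs0 : 0 < s) (hs1 : s < 1) (hn : 2 * s < finrank ℝ E)
    (x : E) : 0 ≤ fracLaplacian s (unitTruncRiesz s) x := by
  rcases eq_or_ne x 0 with rfl | hx
  · refine integral_nonneg fun z => mul_nonneg (fracKernel_nonneg _ _) ?_
    have hmax : unitTruncRiesz s (0 : E) = concaveCutoff 2 := if_pos rfl
    rw [secDiff, hmax]
    linarith [unitTruncRiesz_le_concaveCutoff_two s (0 + z),
      unitTruncRiesz_le_concaveCutoff_two s (0 - z)]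
  · have htrunc := integrable_fracKernel_mul_secDiff_truncRiesz hs0 hs1 hn one_pos x
    rw [truncRiesz_one] at htrunc
    calc 0 ≤ Real.smoothTransition (2 - rieszKernel s x) * fracLaplacian s (rieszKernel s) x :=
          mul_nonneg (Real.smoothTransition.nonneg _)
            (fracLaplacian_rieszKernel_nonneg hs0 hs1 hn hx)
      _ ≤ fracLaplacian s (unitTruncRiesz s) x := by
          rw [fracLaplacian, ← integral_const_mul]
          refine integral_mono_ae
            ((integrable_fracKernel_mul_secDiff_rieszKernel hs0 hs1 hn hx).const_mul _) htrunc ?_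
          filter_upwards [Measure.ae_ne volume x, Measure.ae_ne volume (-x)] with z hz₁ hz₂
          rw [mul_left_comm]
          exact mul_le_mul_of_nonneg_left (mul_secDiff_rieszKernel_le hx hz₁ hz₂)
            (fracKernel_nonneg s z)

lemma rpow_neg_le_mul_rpow_neg {a b c : ℝ} (hγ : 0 ≤ γ) (ha : 0 < a) (hb : 0 < b) (hc : 0 < c)
    (h : c ≤ a * b) : b ^ (-γ) ≤ a ^ γ * c ^ (-γ) := by
  calc b ^ (-γ) = a ^ γ * (a * b) ^ (-γ) := by
        rw [Real.mul_rpow ha.le hb.le, ← mul_assoc, ← Real.rpow_add ha, add_neg_cancel,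
          Real.rpow_zero, one_mul]
    _ ≤ a ^ γ * c ^ (-γ) := mul_le_mul_of_nonneg_left
        (Real.rpow_le_rpow_of_nonpos hc h (neg_nonpos.2 hγ)) (by positivity)

lemma exists_fracLaplacian_unitTruncRiesz_le_rpow (hs0 : 0 < s) (hs1 : s < 1)
    (hn : 2 * s < finrank ℝ E) (hγ0 : 0 ≤ γ) (hγn : γ ≤ finrank ℝ E) :
    ∃ C, 0 ≤ C ∧ ∀ x : E, fracLaplacian s (unitTruncRiesz s) x ≤ C * (1 + ‖x‖) ^ (-γ) := by
  obtain ⟨e, he⟩ := exists_norm_eq E zero_le_one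
  obtain ⟨M, hM0, hM⟩ := exists_fracLaplacian_unitTruncRiesz_le_far hs0 hs1 hn he
  obtain ⟨B, hB⟩ := exists_abs_fracLaplacian_unitTruncRiesz_le (E := E) hs0 hs1 hn
  have hB0 : 0 ≤ B := (abs_nonneg _).trans (hB 0)
  have hc := fracLaplacian_rieszKernel_nonneg hs0 hs1 hn (norm_pos_iff.1 (he ▸ one_pos))
  set c := fracLaplacian s (rieszKernel s) e
  refine ⟨B * 3 ^ γ + (c + M) * 2 ^ γ, by positivity, fun x => ?_⟩
  rw [add_mul, mul_assoc, mul_assoc]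
  rcases le_total ‖x‖ 2 with hx | hx
  · calc fracLaplacian s (unitTruncRiesz s) x ≤ B * 1 ^ (-γ) := by
          rw [Real.one_rpow, mul_one]; exact (le_abs_self _).trans (hB x)
      _ ≤ B * (3 ^ γ * (1 + ‖x‖) ^ (-γ)) :=
          mul_le_mul_of_nonneg_left (rpow_neg_le_mul_rpow_neg hγ0 (by norm_num) one_pos
            (by positivity) (by linarith)) hB0
      _ ≤ _ := le_add_of_nonneg_right (by positivity)
  · calc fracLaplacian s (unitTruncRiesz s) x
        ≤ (c + M * ‖x‖ ^ (-(2 * s))) * ‖x‖ ^ (-(finrank ℝ E : ℝ)) := hM x hx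
      _ ≤ (c + M * 1) * ‖x‖ ^ (-γ) := by
          gcongr
          · exact Real.rpow_le_one_of_one_le_of_nonpos (by linarith) (by linarith)
          · linarith
      _ ≤ (c + M) * (2 ^ γ * (1 + ‖x‖) ^ (-γ)) := by
          rw [mul_one]
          exact mul_le_mul_of_nonneg_left (rpow_neg_le_mul_rpow_neg hγ0 two_pos (by linarith)
            (by positivity) (by linarith)) (by positivity)
      _ ≤ _ := le_add_of_nonneg_left (by positivity)

/-- Superharmonicity of the inner truncation leaves only the contribution of the outer one, which
is small as `R → ∞`. -/
lemma exists_neg_le_fracLaplacian_rieszTest (hs0 : 0 < s) (hs1 : s < 1)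
    (hn : 2 * s < finrank ℝ E) (hγ0 : 0 ≤ γ) (hγn : γ ≤ finrank ℝ E) :
    ∃ C, 0 ≤ C ∧ ∀ (x₀ : E) (r R : ℝ), 0 < r → 1 ≤ R → ∀ x,
      -(C * (1 + ‖x₀‖) ^ γ * R ^ (γ - finrank ℝ E) * (1 + ‖x‖) ^ (-γ))
        ≤ fracLaplacian s (fun y => rieszTest s r R (y - x₀)) x := by
  obtain ⟨C, hC0, hC⟩ := exists_fracLaplacian_unitTruncRiesz_le_rpow (E := E) hs0 hs1 hn hγ0 hγn
  refine ⟨C, hC0, fun x₀ r R hr hR x => ?_⟩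
  have hR0 : 0 < R := by linarith
  rw [fracLaplacian_comp_sub_right, fracLaplacian_rieszTest hs0 hs1 hn hr hR0]
  have hinner : 0 ≤ r ^ (-(finrank ℝ E : ℝ))
      * fracLaplacian s (unitTruncRiesz s) (r⁻¹ • (x - x₀)) :=
    mul_nonneg (by positivity) (fracLaplacian_unitTruncRiesz_nonneg hs0 hs1 hn _)
  have hnorm : 1 + ‖x‖ ≤ (1 + ‖x₀‖) * R * (1 + ‖R⁻¹ • (x - x₀)‖) := by
    rw [norm_smul, Real.norm_of_nonneg (by positivity)]
    have htri : ‖x‖ ≤ ‖x - x₀‖ + ‖x₀‖ := by simpa using norm_add_le (x - x₀) x₀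
    calc 1 + ‖x‖ ≤ (1 + ‖x₀‖) * (R + ‖x - x₀‖) := by
          nlinarith [norm_nonneg x₀, norm_nonneg (x - x₀), mul_nonneg (norm_nonneg x₀)
            (norm_nonneg (x - x₀)), mul_nonneg (norm_nonneg x₀) (sub_nonneg.2 hR)]
      _ = (1 + ‖x₀‖) * R * (1 + R⁻¹ * ‖x - x₀‖) := by field_simp
  have houter : R ^ (-(finrank ℝ E : ℝ)) * fracLaplacian s (unitTruncRiesz s) (R⁻¹ • (x - x₀))
      ≤ C * (1 + ‖x₀‖) ^ γ * R ^ (γ - finrank ℝ E) * (1 + ‖x‖) ^ (-γ) :=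
    calc R ^ (-(finrank ℝ E : ℝ)) * fracLaplacian s (unitTruncRiesz s) (R⁻¹ • (x - x₀))
        ≤ R ^ (-(finrank ℝ E : ℝ)) * (C * (((1 + ‖x₀‖) * R) ^ γ * (1 + ‖x‖) ^ (-γ))) :=
          mul_le_mul_of_nonneg_left ((hC _).trans (mul_le_mul_of_nonneg_left
            (rpow_neg_le_mul_rpow_neg hγ0 (by positivity) (by positivity) (by positivity) hnorm)
            hC0)) (by positivity)
      _ = _ := by
          rw [Real.mul_rpow (by positivity) hR0.le, sub_eq_add_neg, Real.rpow_add hR0]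
          ring
  linarith

end Superharmonicity

section Energy

lemma nontrivial_of_two_mul_lt_finrank {E : Type*} [AddCommGroup E] [Module ℝ E] {s : ℝ}
    (hs0 : 0 < s) (hn : 2 * s < finrank ℝ E) : Nontrivial E :=
  Module.nontrivial_of_finrank_pos (R := ℝ)
    (Nat.cast_pos.1 ((by linarith : (0 : ℝ) < 2 * s).trans hn))

lemma rpow_le_rpow_sub_one_mul {a b m : ℝ} (ha : 0 ≤ a) (hab : a ≤ b) (hm : 1 ≤ m) :
    a ^ m ≤ b ^ (m - 1) * a := by
  calc a ^ m = a ^ (m - 1) * a := by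
        rw [← Real.rpow_add_one' ha (by linarith), sub_add_cancel]
    _ ≤ b ^ (m - 1) * a :=
        mul_le_mul_of_nonneg_right (Real.rpow_le_rpow ha hab (sub_nonneg.2 hm)) ha

section WeightedPower

variable {α : Type*} [MeasurableSpace α] {μ : Measure α} {f ρ w : α → ℝ} {B c m : ℝ}

lemma ae_rpow_mul_le (hm : 1 ≤ m) (hc : 0 < c) (hB : 0 ≤ B) (hf : ∀ x, 0 ≤ f x)
    (hfB : ∀ᵐ x ∂μ, f x ≤ B) (hw : ∀ x, 0 ≤ w x) (hwρ : ∀ᵐ x ∂μ, c * w x ≤ ρ x) :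
    ∀ᵐ x ∂μ, f x ^ m * w x ≤ B ^ (m - 1) / c * (f x * ρ x) := by
  filter_upwards [hfB, hwρ] with x hx hρx
  calc f x ^ m * w x ≤ B ^ (m - 1) * f x * (ρ x / c) :=
        mul_le_mul (rpow_le_rpow_sub_one_mul (hf x) hx hm) ((le_div_iff₀' hc).2 hρx) (hw x)
          (mul_nonneg (Real.rpow_nonneg hB _) (hf x))
    _ = B ^ (m - 1) / c * (f x * ρ x) := by ring

lemma integrable_rpow_mul (hm : 1 ≤ m) (hc : 0 < c) (hB : 0 ≤ B) (hf : ∀ x, 0 ≤ f x)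
    (hfm : Measurable f) (hfB : ∀ᵐ x ∂μ, f x ≤ B) (hw : ∀ x, 0 ≤ w x) (hwm : Measurable w)
    (hwρ : ∀ᵐ x ∂μ, c * w x ≤ ρ x) (hfρ : Integrable (fun x => f x * ρ x) μ) :
    Integrable (fun x => f x ^ m * w x) μ := by
  refine (hfρ.const_mul (B ^ (m - 1) / c)).mono'
    ((hfm.pow_const m).mul hwm).aestronglyMeasurable ?_
  filter_upwards [ae_rpow_mul_le hm hc hB hf hfB hw hwρ] with x hx
  rwa [Real.norm_of_nonneg (mul_nonneg (Real.rpow_nonneg (hf x) _) (hw x))]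

end WeightedPower

variable {d : ℕ} {s m κ γ c : ℝ} {ρ : Ed d → ℝ} {u : Ed d → ℝ → ℝ}

lemma AdmissibleWeight.ae_mul_rpow_le {γ₀ C : ℝ} [Nontrivial (Ed d)]
    (hρ : AdmissibleWeight d ρ γ₀ γ c C) (hγ₀ : 0 ≤ γ₀) (hγ : 0 ≤ γ) :
    ∀ᵐ x : Ed d, c * (1 + ‖x‖) ^ (-γ) ≤ ρ x := by
  obtain ⟨hc, -, -, -, hnear, hfar⟩ := hρ
  filter_upwards [hnear, hfar, Measure.ae_ne volume 0] with x hx₁ hx₂ hx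
  have hx0 : 0 < ‖x‖ := norm_pos_iff.2 hx
  rcases le_or_gt ‖x‖ 1 with h | h
  · refine (mul_le_mul_of_nonneg_left ?_ hc.le).trans (hx₁ h).1
    exact (Real.rpow_le_one_of_one_le_of_nonpos (by linarith) (by linarith)).trans
      (Real.one_le_rpow_of_pos_of_le_one_of_nonpos hx0 h (by linarith))
  · exact (mul_le_mul_of_nonneg_left (Real.rpow_le_rpow_of_nonpos hx0 (by linarith)
      (by linarith)) hc.le).trans (hx₂ h).1

lemma WeakSolCore.measurable_slice (hu : WeakSolCore d s m κ ρ u) (t : ℝ) :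
    Measurable fun x => u x t :=
  hu.measurable.comp (measurable_id.prodMk measurable_const)

lemma WeakSolCore.exists_ae_ae_le (hu : WeakSolCore d s m κ ρ u) {τ : ℝ} (hτ : 0 < τ) :
    ∃ B : ℝ, 0 ≤ B ∧ ∀ᵐ t : ℝ, τ < t → ∀ᵐ x : Ed d, u x t ≤ B := by
  obtain ⟨B, hB⟩ := hu.essBdd τ hτ
  have hmeas : MeasurableSet {p : Ed d × ℝ | τ < p.2 → u p.1 p.2 ≤ B} :=
    (measurableSet_lt measurable_const measurable_snd).imp
      (measurableSet_le hu.measurable measurable_const)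
  refine ⟨max B 0, le_max_right _ _, ?_⟩
  filter_upwards [(Measure.ae_ae_comm hmeas).1 (Measure.ae_ae_of_ae_prod hB)] with t ht hτt
  filter_upwards [ht] with x hx using (hx hτt).trans (le_max_left _ _)

lemma WeakSolCore.exists_ae_integral_le (hu : WeakSolCore d s m κ ρ u) :
    ∃ M : ℝ, 0 ≤ M ∧ ∀ᵐ t : ℝ, 0 < t →
      Integrable (fun x => u x t * ρ x) ∧ ∫ x, u x t * ρ x ≤ M := by
  obtain ⟨M, hM⟩ := hu.massBound
  refine ⟨max M 0, le_max_right _ _, ?_⟩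
  filter_upwards [(ae_restrict_iff' measurableSet_Ioi).1 hM] with t ht h0
    using ⟨(ht h0).1, (ht h0).2.trans (le_max_left _ _)⟩

lemma WeakSolCore.exists_ae_integral_rpow_mul_le (hu : WeakSolCore d s m κ ρ u) (hm : 1 ≤ m)
    (hc : 0 < c) {w : Ed d → ℝ} (hw : ∀ x, 0 ≤ w x) (hwm : Measurable w)
    (hwρ : ∀ᵐ x, c * w x ≤ ρ x) {τ : ℝ} (hτ : 0 < τ) :
    ∃ K : ℝ, 0 ≤ K ∧ ∀ᵐ t : ℝ, τ < t →
      Integrable (fun x => u x t ^ m * w x) ∧ ∫ x, u x t ^ m * w x ≤ K := by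
  obtain ⟨B, hB0, hB⟩ := hu.exists_ae_ae_le hτ
  obtain ⟨M, hM0, hM⟩ := hu.exists_ae_integral_le
  refine ⟨B ^ (m - 1) / c * M, by positivity, ?_⟩
  filter_upwards [hB, hM] with t hBt hMt hτt
  obtain ⟨hmass, hmassM⟩ := hMt (hτ.trans hτt)
  have hint := integrable_rpow_mul hm hc hB0 (hu.nonneg · t) (hu.measurable_slice t) (hBt hτt)
    hw hwm hwρ hmass
  refine ⟨hint, (integral_mono_ae hint (hmass.const_mul _)
    (ae_rpow_mul_le hm hc hB0 (hu.nonneg · t) (hBt hτt) hw hwρ)).trans ?_⟩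
  rw [integral_const_mul]
  exact mul_le_mul_of_nonneg_left hmassM (by positivity)

lemma WeakSolCore.exists_neg_le_gagliardoE_rieszTest (hu : WeakSolCore d s m κ ρ u)
    (hs0 : 0 < s) (hs1 : s < 1) (hd : 2 * s < d) (hm : 1 ≤ m) (hκ : 0 ≤ κ) (hγ0 : 0 ≤ γ)
    (hγd : γ ≤ d) (hc : 0 < c) (hρ : ∀ᵐ x, c * (1 + ‖x‖) ^ (-γ) ≤ ρ x) {τ : ℝ} (hτ : 0 < τ) :
    ∃ D : ℝ, 0 ≤ D ∧ ∀ᵐ t : ℝ, τ < t → ∀ (x₀ : Ed d) (r R : ℝ), 0 < r → 1 ≤ R →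
      -(D * (1 + ‖x₀‖) ^ γ * R ^ (γ - d))
        ≤ gagliardoE d s κ (fun x => u x t ^ m) (fun x => rieszTest s r R (x - x₀)) := by
  rw [← finrank_euclideanSpace_fin (𝕜 := ℝ) (n := d)] at hd hγd
  have := nontrivial_of_two_mul_lt_finrank hs0 hd
  obtain ⟨A, hA0, hA⟩ := exists_neg_le_fracLaplacian_rieszTest (E := Ed d) hs0 hs1 hd hγ0 hγd
  obtain ⟨B, -, hB⟩ := hu.exists_ae_ae_le hτ
  obtain ⟨K, hK0, hK⟩ := hu.exists_ae_integral_rpow_mul_le hm hc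
    (w := fun x => (1 + ‖x‖) ^ (-γ)) (fun x => by positivity)
    ((measurable_norm.const_add 1).pow_const _) hρ hτ
  refine ⟨κ / 2 * (A * K), by positivity, ?_⟩
  filter_upwards [hB, hK] with t hBt hKt hτt x₀ r R hr hR
  obtain ⟨hint, hintK⟩ := hKt hτt
  set a := A * (1 + ‖x₀‖) ^ γ * R ^ (γ - finrank ℝ (Ed d)) with ha
  have hlower := neg_integral_le_gagliardoE hs0 hs1 hκ (B := B ^ m)
    (f := fun x => rieszTest s r R (x - x₀)) (w := fun x => a * (1 + ‖x‖) ^ (-γ))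
    ((hu.measurable_slice t).pow_const m) (fun x => Real.rpow_nonneg (hu.nonneg x t) _)
    (by filter_upwards [hBt hτt] with x hx using Real.rpow_le_rpow (hu.nonneg x t) hx (by linarith))
    (contDiff_infty.1 ((contDiff_rieszTest hd r R).comp (contDiff_id.sub contDiff_const)) 2)
    ((hasCompactSupport_rieszTest hd hr (by linarith)).comp_homeomorph (Homeomorph.subRight x₀))
    (fun x => by positivity) ((hint.const_mul a).congr (ae_of_all _ fun x => by ring))
    (fun x => hA x₀ r R hr hR x)
  have hfactor : ∫ x, u x t ^ m * (a * (1 + ‖x‖) ^ (-γ))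
      = a * ∫ x, u x t ^ m * (1 + ‖x‖) ^ (-γ) := by
    simp only [mul_left_comm _ a, integral_const_mul]
  calc -(κ / 2 * (A * K) * (1 + ‖x₀‖) ^ γ * R ^ (γ - d)) = -(κ / 2 * (a * K)) := by
        rw [ha, finrank_euclideanSpace_fin]; ring
    _ ≤ -(κ / 2 * ∫ x, u x t ^ m * (a * (1 + ‖x‖) ^ (-γ))) := by rw [hfactor]; gcongr
    _ ≤ _ := hlower

end Energy

section Monotonicity

/-- The mollified indicator of `[t₁, t₂]`: the test function with derivative
`φ (t - t₁) - φ (t - t₂)`, where `φ` is a normalized bump. -/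
def smoothPlateau (φ : ContDiffBump (0 : ℝ)) (t₁ t₂ t : ℝ) : ℝ :=
  ∫ a in (t - t₂)..(t - t₁), φ.normed volume a

variable {φ : ContDiffBump (0 : ℝ)} {F : ℝ → ℝ} {τ t₁ t₂ : ℝ}

lemma hasDerivAt_smoothPlateau (φ : ContDiffBump (0 : ℝ)) (t₁ t₂ t : ℝ) :
    HasDerivAt (smoothPlateau φ t₁ t₂)
      (φ.normed volume (t - t₁) - φ.normed volume (t - t₂)) t := by
  have hprim (b : ℝ) : HasDerivAt (fun t => ∫ a in (0)..(t - b), φ.normed volume a)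
      (φ.normed volume (t - b)) t :=
    HasDerivAt.comp_sub_const t b (φ.continuous_normed.integral_hasStrictDerivAt 0 _).hasDerivAt
  refine ((hprim t₁).sub (hprim t₂)).congr_of_eventuallyEq (Eventually.of_forall fun x => ?_)
  exact (intervalIntegral.integral_interval_sub_left (φ.continuous_normed.intervalIntegrable _ _)
    (φ.continuous_normed.intervalIntegrable _ _)).symm

lemma deriv_smoothPlateau (φ : ContDiffBump (0 : ℝ)) (t₁ t₂ : ℝ) :
    deriv (smoothPlateau φ t₁ t₂) =
      fun t => φ.normed volume (t - t₁) - φ.normed volume (t - t₂) :=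
  funext fun t => (hasDerivAt_smoothPlateau φ t₁ t₂ t).deriv

lemma contDiff_smoothPlateau (φ : ContDiffBump (0 : ℝ)) (t₁ t₂ : ℝ) :
    ContDiff ℝ (⊤ : ℕ∞) (smoothPlateau φ t₁ t₂) := by
  rw [contDiff_infty_iff_deriv, deriv_smoothPlateau]
  exact ⟨fun t => (hasDerivAt_smoothPlateau φ t₁ t₂ t).differentiableAt,
    (φ.contDiff_normed.comp (contDiff_id.sub contDiff_const)).sub
      (φ.contDiff_normed.comp (contDiff_id.sub contDiff_const))⟩

lemma smoothPlateau_nonneg (φ : ContDiffBump (0 : ℝ)) (ht : t₁ ≤ t₂) (t : ℝ) :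
    0 ≤ smoothPlateau φ t₁ t₂ t :=
  intervalIntegral.integral_nonneg (by linarith) fun a _ => φ.nonneg_normed a

lemma tsupport_smoothPlateau_subset (φ : ContDiffBump (0 : ℝ)) (ht : t₁ ≤ t₂) :
    tsupport (smoothPlateau φ t₁ t₂) ⊆ Icc (t₁ - φ.rOut) (t₂ + φ.rOut) := by
  refine closure_minimal (fun t hsupp => ?_) isClosed_Icc
  obtain ⟨a, ha, hφa⟩ : ∃ a ∈ uIcc (t - t₂) (t - t₁), φ.normed volume a ≠ 0 := by
    by_contra! hzero
    exact hsupp ((intervalIntegral.integral_congr hzero).trans intervalIntegral.integral_zero)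
  rw [uIcc_of_le (by linarith)] at ha
  have hball : a ∈ Metric.ball 0 φ.rOut := φ.support_normed_eq (μ := volume) ▸ hφa
  rw [Real.ball_eq_Ioo] at hball
  constructor <;> linarith [hball.1, hball.2, ha.1, ha.2]

lemma integrable_mul_normed_comp_sub_right (φ : ContDiffBump (0 : ℝ)) (hF : LocallyIntegrable F)
    (t : ℝ) : Integrable fun a => F a * φ.normed volume (a - t) := by
  simpa only [smul_eq_mul] using hF.integrable_smul_right_of_hasCompactSupport
    (g := fun a => φ.normed volume (a - t))
    (φ.continuous_normed.comp (continuous_id.sub continuous_const))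
    (φ.hasCompactSupport_normed.comp_homeomorph (Homeomorph.subRight t))

lemma integral_mul_normed_le_of_integral_mul_deriv_nonneg (hF : LocallyIntegrable F)
    (h : ∀ θ : ℝ → ℝ, ContDiff ℝ (⊤ : ℕ∞) θ → HasCompactSupport θ → tsupport θ ⊆ Ioi τ →
      (∀ t, 0 ≤ θ t) → 0 ≤ ∫ t, F t * deriv θ t)
    (hφ : τ < t₁ - φ.rOut) (ht : t₁ ≤ t₂) :
    ∫ a, F a * φ.normed volume (a - t₂) ≤ ∫ a, F a * φ.normed volume (a - t₁) := by
  have hsupp := tsupport_smoothPlateau_subset φ ht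
  have hnonneg := h _ (contDiff_smoothPlateau φ t₁ t₂)
    (isCompact_Icc.of_isClosed_subset (isClosed_tsupport _) hsupp)
    (hsupp.trans fun t ht => hφ.trans_le ht.1) (smoothPlateau_nonneg φ ht)
  simp only [deriv_smoothPlateau, mul_sub] at hnonneg
  rwa [integral_sub (integrable_mul_normed_comp_sub_right φ hF t₁)
    (integrable_mul_normed_comp_sub_right φ hF t₂), sub_nonneg] at hnonneg

lemma exists_contDiffBump_ae_tendsto (hF : LocallyIntegrable F) :
    ∃ φ : ℕ → ContDiffBump (0 : ℝ), Tendsto (fun n => (φ n).rOut) atTop (𝓝 0) ∧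
      ∀ᵐ t, Tendsto (fun n => ∫ a, F a * (φ n).normed volume (a - t)) atTop (𝓝 (F t)) := by
  let φ (n : ℕ) : ContDiffBump (0 : ℝ) :=
    ⟨1 / (n + 1) / 2, 1 / (n + 1), by positivity, half_lt_self (by positivity)⟩
  have hφ : Tendsto (fun n => (φ n).rOut) atTop (𝓝 0) := tendsto_one_div_add_atTop_nhds_zero_nat
  refine ⟨φ, hφ, ?_⟩
  filter_upwards [ContDiffBump.ae_convolution_tendsto_right_of_locallyIntegrable (μ := volume)
    (K := 2) hφ (Eventually.of_forall fun n => (mul_div_cancel₀ _ two_ne_zero).ge) hF] with t ht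
  refine ht.congr fun n => ?_
  rw [convolution_lsmul_swap]
  refine integral_congr_ae (ae_of_all _ fun a => ?_)
  simp only [smul_eq_mul]
  rw [← (φ n).normed_neg (a - t), neg_sub, mul_comm]

lemma ae_fst_and_snd {P : ℝ → Prop} (h : ∀ᵐ t, P t) : ∀ᵐ p : ℝ × ℝ, P p.1 ∧ P p.2 :=
  (Measure.quasiMeasurePreserving_fst.ae h).and (Measure.quasiMeasurePreserving_snd.ae h)

lemma ae_le_of_integral_mul_deriv_nonneg (hF : LocallyIntegrable F)
    (h : ∀ θ : ℝ → ℝ, ContDiff ℝ (⊤ : ℕ∞) θ → HasCompactSupport θ → tsupport θ ⊆ Ioi τ →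
      (∀ t, 0 ≤ θ t) → 0 ≤ ∫ t, F t * deriv θ t) :
    ∀ᵐ p : ℝ × ℝ, τ < p.1 → p.1 ≤ p.2 → F p.2 ≤ F p.1 := by
  obtain ⟨φ, hφ, hlim⟩ := exists_contDiffBump_ae_tendsto hF
  filter_upwards [ae_fst_and_snd hlim] with p ⟨hp₁, hp₂⟩ hτ hle
  refine le_of_tendsto_of_tendsto hp₂ hp₁ ?_
  filter_upwards [hφ.eventually (gt_mem_nhds (sub_pos.2 hτ))] with n hn
  exact integral_mul_normed_le_of_integral_mul_deriv_nonneg hF h (by linarith) hle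

lemma integral_mul_deriv_eq_neg_integral {θ : ℝ → ℝ} (hθ : ContDiff ℝ 1 θ)
    (hθc : HasCompactSupport θ) : ∫ t, t * deriv θ t = -∫ t, θ t := by
  have hθi : Integrable θ := hθ.continuous.integrable_of_hasCompactSupport hθc
  have hparts := integral_mul_deriv_eq_deriv_mul_of_integrable (u := id) (u' := fun _ => 1)
    (v := θ) (v' := deriv θ) (fun t _ => hasDerivAt_id t)
    (fun t _ => (hθ.differentiable one_ne_zero t).hasDerivAt)
    ((continuous_id.mul (hθ.continuous_deriv le_rfl)).integrable_of_hasCompactSupport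
      hθc.deriv.mul_left)
    (by simpa [Pi.mul_def] using hθi)
    ((continuous_id.mul hθ.continuous).integrable_of_hasCompactSupport hθc.mul_left)
  simpa using hparts

/-- Subtracting the linear function `ε t` reduces the claim to the case `ε = 0`. -/
lemma ae_le_add_of_neg_le_integral_mul_deriv {ε : ℝ} (hF : LocallyIntegrable F)
    (h : ∀ θ : ℝ → ℝ, ContDiff ℝ (⊤ : ℕ∞) θ → HasCompactSupport θ → tsupport θ ⊆ Ioi τ →
      (∀ t, 0 ≤ θ t) → -(ε * ∫ t, θ t) ≤ ∫ t, F t * deriv θ t) :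
    ∀ᵐ p : ℝ × ℝ, τ < p.1 → p.1 ≤ p.2 → F p.2 ≤ F p.1 + ε * (p.2 - p.1) := by
  have hlin : LocallyIntegrable fun t : ℝ => ε * t :=
    (continuous_const_mul ε).locallyIntegrable (μ := volume)
  have hmono := ae_le_of_integral_mul_deriv_nonneg (τ := τ) (hF.sub hlin) fun θ hθ hθc hθs hθ0 => by
    have hderiv {g : ℝ → ℝ} (hg : LocallyIntegrable g) : Integrable fun t => g t * deriv θ t :=
      hg.integrable_smul_right_of_hasCompactSupport (hθ.continuous_deriv (by simp)) hθc.deriv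
    simp only [Pi.sub_apply, sub_mul]
    rw [integral_sub (hderiv hF) (hderiv hlin)]
    simp only [mul_assoc, integral_const_mul]
    rw [integral_mul_deriv_eq_neg_integral (contDiff_infty.1 hθ 1) hθc]
    linarith [h θ hθ hθc hθs hθ0]
  filter_upwards [hmono] with p hp hτ hle
  have := hp hτ hle
  simp only [Pi.sub_apply] at this
  linarith

end Monotonicity

section TimeEvolution

lemma neg_mul_integral_le_integral_mul {α : Type*} [MeasurableSpace α] {μ : Measure α}
    {θ g : α → ℝ} {ε : ℝ} (hε : 0 ≤ ε) (hθ : Integrable θ μ) (hθ0 : ∀ x, 0 ≤ θ x)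
    (hg : ∀ᵐ x ∂μ, θ x ≠ 0 → -ε ≤ g x) : -(ε * ∫ x, θ x ∂μ) ≤ ∫ x, θ x * g x ∂μ := by
  by_cases hi : Integrable (fun x => θ x * g x) μ
  · rw [← integral_const_mul, ← integral_neg]
    refine integral_mono_ae (hθ.const_mul ε).neg hi (hg.mono fun x hx => ?_)
    rcases eq_or_ne (θ x) 0 with h | h
    · simp [h]
    · simpa only [mul_neg, mul_comm ε] using mul_le_mul_of_nonneg_left (hx h) (hθ0 x)
  · rw [integral_undef hi, neg_nonpos]
    exact mul_nonneg hε (integral_nonneg hθ0)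

lemma gagliardoE_const_mul {d : ℕ} (s κ a : ℝ) (v w : Ed d → ℝ) :
    gagliardoE d s κ v (fun x => a * w x) = a * gagliardoE d s κ v w := by
  simp only [gagliardoE, ← integral_const_mul]
  congr 1 with p
  ring

variable {d : ℕ} {s m κ τ ε : ℝ} {ρ ψ : Ed d → ℝ} {u : Ed d → ℝ → ℝ} {θ : ℝ → ℝ}

lemma isTestFn_mul (hθ : ContDiff ℝ (⊤ : ℕ∞) θ) (hθc : HasCompactSupport θ)
    (hθs : tsupport θ ⊆ Ioi 0) (hψ : ContDiff ℝ (⊤ : ℕ∞) ψ) (hψc : HasCompactSupport ψ) :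
    IsTestFn d fun p => θ p.2 * ψ p.1 := by
  have hsupp : tsupport (fun p : Ed d × ℝ => θ p.2 * ψ p.1) ⊆ tsupport ψ ×ˢ tsupport θ :=
    closure_minimal (fun p hp => ⟨subset_tsupport _ (right_ne_zero_of_mul hp),
      subset_tsupport _ (left_ne_zero_of_mul hp)⟩)
      ((isClosed_tsupport _).prod (isClosed_tsupport _))
  exact ⟨(hθ.comp contDiff_snd).mul (hψ.comp contDiff_fst),
    (hψc.isCompact.prod hθc.isCompact).of_isClosed_subset (isClosed_tsupport _) hsupp,
    hsupp.trans (prod_mono (subset_univ _) hθs)⟩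

namespace WeakSolCore

lemma locallyIntegrable_integral_mul (hu : WeakSolCore d s m κ ρ u) (hρm : Measurable ρ)
    (hρ : ∀ᵐ x, 0 ≤ ρ x) (hψ : Continuous ψ) (hψc : HasCompactSupport ψ) :
    LocallyIntegrable ((Ioi 0).indicator fun t => ∫ x, u x t * ρ x * ψ x) := by
  obtain ⟨A, hA⟩ := hψ.bounded_above_of_compact_support hψc
  obtain ⟨M, hM0, hM⟩ := hu.exists_ae_integral_le
  have hmeas : Measurable fun p : ℝ × Ed d => u p.2 p.1 * ρ p.2 * ψ p.2 :=
    ((hu.measurable.comp measurable_swap).mul (hρm.comp measurable_snd)).mul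
      (hψ.measurable.comp measurable_snd)
  refine (locallyIntegrable_const (M * |A|)).mono
    (hmeas.stronglyMeasurable.integral_prod_right'.indicator
      measurableSet_Ioi).aestronglyMeasurable ?_
  filter_upwards [hM] with t ht
  rw [Real.norm_of_nonneg (by positivity : 0 ≤ M * |A|)]
  by_cases h0 : t ∈ Ioi 0
  · rw [indicator_of_mem h0]
    refine (norm_integral_le_of_norm_le ((ht h0).1.mul_const |A|) ?_).trans ?_
    · filter_upwards [hρ] with x hx
      rw [norm_mul, Real.norm_of_nonneg (mul_nonneg (hu.nonneg x t) hx)]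
      exact mul_le_mul_of_nonneg_left ((hA x).trans (le_abs_self A)) (mul_nonneg (hu.nonneg x t) hx)
    · rw [integral_mul_const]
      exact mul_le_mul_of_nonneg_right (ht h0).2 (abs_nonneg A)
  · rw [indicator_of_notMem h0, norm_zero]
    positivity

lemma integral_mul_deriv_eq_integral_mul_gagliardoE (hu : WeakSolCore d s m κ ρ u)
    (hθ : ContDiff ℝ (⊤ : ℕ∞) θ) (hθc : HasCompactSupport θ) (hθs : tsupport θ ⊆ Ioi 0)
    (hψ : ContDiff ℝ (⊤ : ℕ∞) ψ) (hψc : HasCompactSupport ψ) :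
    ∫ t, (Ioi 0).indicator (fun t => ∫ x, u x t * ρ x * ψ x) t * deriv θ t
      = ∫ t in Ioi 0, θ t * gagliardoE d s κ (fun x => u x t ^ m) ψ := by
  have hweak := hu.weakForm _ (isTestFn_mul hθ hθc hθs hψ hψc)
  simp only [gagliardoE_const_mul, deriv_mul_const_field] at hweak
  have hslice (t : ℝ) : ∫ x, u x t * (deriv θ t * ψ x) * ρ x
      = (∫ x, u x t * ρ x * ψ x) * deriv θ t := by
    rw [← integral_mul_const]
    congr 1 with x
    ring
  simp only [hslice] at hweak
  simp only [← indicator_mul_left, integral_indicator measurableSet_Ioi]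
  linarith

/-- Testing the equation with `θ t * ψ x` turns energy bounds into bounds on the distributional
time derivative of `∫ u ρ ψ`. -/
lemma ae_integral_mul_le_add (hu : WeakSolCore d s m κ ρ u) (hρm : Measurable ρ)
    (hρ : ∀ᵐ x, 0 ≤ ρ x) (hψ : ContDiff ℝ (⊤ : ℕ∞) ψ) (hψc : HasCompactSupport ψ) (hτ : 0 < τ)
    (hε : 0 ≤ ε) (hE : ∀ᵐ t : ℝ, τ < t → -ε ≤ gagliardoE d s κ (fun x => u x t ^ m) ψ) :
    ∀ᵐ p : ℝ × ℝ, τ < p.1 → p.1 ≤ p.2 →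
      ∫ x, u x p.2 * ρ x * ψ x ≤ (∫ x, u x p.1 * ρ x * ψ x) + ε * (p.2 - p.1) := by
  have hmono := ae_le_add_of_neg_le_integral_mul_deriv (τ := τ) (ε := ε)
    (hu.locallyIntegrable_integral_mul hρm hρ hψ.continuous hψc) fun θ hθ hθc hθs hθ0 => by
      have hθs0 : tsupport θ ⊆ Ioi 0 := hθs.trans (Ioi_subset_Ioi hτ.le)
      have hθi : Integrable θ := hθ.continuous.integrable_of_hasCompactSupport hθc
      rw [hu.integral_mul_deriv_eq_integral_mul_gagliardoE hθ hθc hθs0 hψ hψc,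
        ← setIntegral_eq_integral_of_forall_compl_eq_zero fun t ht =>
          image_eq_zero_of_notMem_tsupport fun h => ht (hθs0 h)]
      refine neg_mul_integral_le_integral_mul hε hθi.integrableOn hθ0 (ae_restrict_of_ae ?_)
      filter_upwards [hE] with t ht hθt using ht (hθs (subset_tsupport θ hθt))
  filter_upwards [hmono] with p hp hτp hle
  have h₁ : p.1 ∈ Ioi 0 := hτ.trans hτp
  have h₂ : p.2 ∈ Ioi 0 := h₁.trans_le hle
  simpa only [indicator_of_mem h₁, indicator_of_mem h₂] using hp hτp hle

end WeakSolCore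

end TimeEvolution

section Limits

lemma tendsto_add_one_rpow_neg {a : ℝ} (ha : a < 0) :
    Tendsto (fun n : ℕ => ((n : ℝ) + 1) ^ a) atTop (𝓝 0) := by
  simpa only [neg_neg, Function.comp_def] using (tendsto_rpow_neg_atTop (neg_pos.2 ha)).comp
    (tendsto_atTop_add_const_right atTop (1 : ℝ) tendsto_natCast_atTop_atTop)

variable {E : Type*} [NormedAddCommGroup E] [InnerProductSpace ℝ E] {s r : ℝ} {f f₁ f₂ : E → ℝ}

lemma norm_truncRiesz_le (hr : 0 < r) (x : E) :
    ‖truncRiesz s r x‖ ≤ r ^ (2 * s - (finrank ℝ E : ℝ)) * 2 := by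
  rw [Real.norm_of_nonneg (truncRiesz_nonneg s hr x)]
  exact truncRiesz_le s hr x

lemma eventually_truncRiesz_eq_rieszKernel (hn : 2 * s < finrank ℝ E) {x : E} (hx : x ≠ 0) :
    ∀ᶠ n : ℕ in atTop, truncRiesz s (1 / ((n : ℝ) + 1)) x = rieszKernel s x := by
  filter_upwards [tendsto_one_div_add_atTop_nhds_zero_nat.eventually
    (gt_mem_nhds (norm_pos_iff.2 hx))] with n hn'
  exact truncRiesz_eq_rieszKernel hn (by positivity) hn'.le

variable [FiniteDimensional ℝ E] [MeasurableSpace E] [BorelSpace E]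

lemma integrable_mul_truncRiesz (hn : 2 * s < finrank ℝ E) (hf : Integrable f) (hr : 0 < r)
    (x : E) : Integrable fun y => f y * truncRiesz s r (y - x) :=
  hf.mul_bdd ((continuous_truncRiesz hn r).comp
    (continuous_id.sub continuous_const)).aestronglyMeasurable
    (ae_of_all _ fun y => norm_truncRiesz_le hr (y - x))

lemma continuous_integral_mul_truncRiesz (hn : 2 * s < finrank ℝ E) (hf : Integrable f)
    (hr : 0 < r) : Continuous fun x => ∫ y, f y * truncRiesz s r (y - x) := by
  refine continuous_of_dominated
    (bound := fun y => ‖f y‖ * (r ^ (2 * s - (finrank ℝ E : ℝ)) * 2))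
    (fun x => (integrable_mul_truncRiesz hn hf hr x).aestronglyMeasurable)
    (fun x => ae_of_all _ fun y => ?_) (hf.norm.mul_const _) (ae_of_all _ fun y => ?_)
  · rw [norm_mul]
    exact mul_le_mul_of_nonneg_left (norm_truncRiesz_le hr _) (norm_nonneg _)
  · exact continuous_const.mul
      ((continuous_truncRiesz hn r).comp (continuous_const.sub continuous_id))

lemma tendsto_integral_mul_rieszTest (hn : 2 * s < finrank ℝ E) (hf : Integrable f) (hr : 0 < r)
    (x : E) :
    Tendsto (fun j : ℕ => ∫ y, f y * rieszTest s r (j + 1) (y - x)) atTop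
      (𝓝 (∫ y, f y * truncRiesz s r (y - x))) := by
  have htail : Tendsto (fun j : ℕ => ∫ y, f y * truncRiesz s (j + 1) (y - x)) atTop (𝓝 0) := by
    have hbound := ((tendsto_add_one_rpow_neg (sub_neg.2 hn)).mul_const 2).const_mul (∫ y, ‖f y‖)
    rw [zero_mul, mul_zero] at hbound
    refine squeeze_zero_norm (fun j => ?_) hbound
    rw [← integral_mul_const]
    refine norm_integral_le_of_norm_le (hf.norm.mul_const _) (ae_of_all _ fun y => ?_)
    rw [norm_mul]
    exact mul_le_mul_of_nonneg_left (norm_truncRiesz_le (by positivity) _) (norm_nonneg _)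
  refine (sub_zero (∫ y, f y * truncRiesz s r (y - x)) ▸ htail.const_sub _).congr fun j => ?_
  rw [← integral_sub (integrable_mul_truncRiesz hn hf hr x)
    (integrable_mul_truncRiesz hn hf (by positivity) x)]
  simp only [rieszTest, mul_sub]

lemma lintegral_mul_rieszKernel_le [Nontrivial E] (hn : 2 * s < finrank ℝ E)
    (hf₁ : Integrable f₁) (hf₂ : Integrable f₂) (hf₁0 : 0 ≤ᵐ[volume] f₁) (hf₂0 : 0 ≤ᵐ[volume] f₂)
    {x : E} (h : ∀ n : ℕ, ∫ y, f₂ y * truncRiesz s (1 / ((n : ℝ) + 1)) (y - x)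
      ≤ ∫ y, f₁ y * truncRiesz s (1 / ((n : ℝ) + 1)) (y - x)) :
    ∫⁻ y, ENNReal.ofReal (f₂ y * rieszKernel s (y - x))
      ≤ ∫⁻ y, ENNReal.ofReal (f₁ y * rieszKernel s (y - x)) := by
  have hr (n : ℕ) : (0 : ℝ) < 1 / ((n : ℝ) + 1) := by positivity
  have hlintegral {f : E → ℝ} (hf : Integrable f) (hf0 : 0 ≤ᵐ[volume] f) (n : ℕ) :=
    ofReal_integral_eq_lintegral_ofReal (integrable_mul_truncRiesz hn hf (hr n) x)
      (hf0.mono fun y hy => mul_nonneg hy (truncRiesz_nonneg s (hr n) _))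
  calc ∫⁻ y, ENNReal.ofReal (f₂ y * rieszKernel s (y - x))
      = ∫⁻ y, liminf (fun n : ℕ =>
          ENNReal.ofReal (f₂ y * truncRiesz s (1 / ((n : ℝ) + 1)) (y - x))) atTop := by
        refine lintegral_congr_ae ((Measure.ae_ne volume x).mono fun y hy => ?_)
        beta_reduce
        rw [liminf_congr ((eventually_truncRiesz_eq_rieszKernel hn (sub_ne_zero.2 hy)).mono
          fun n h => by rw [h]), liminf_const]
    _ ≤ liminf (fun n : ℕ =>
          ∫⁻ y, ENNReal.ofReal (f₂ y * truncRiesz s (1 / ((n : ℝ) + 1)) (y - x))) atTop :=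
        lintegral_liminf_le' fun n =>
          (integrable_mul_truncRiesz hn hf₂ (hr n) x).aemeasurable.ennreal_ofReal
    _ ≤ ∫⁻ y, ENNReal.ofReal (f₁ y * rieszKernel s (y - x)) := by
        refine liminf_le_of_frequently_le' (Frequently.of_forall fun n => ?_)
        rw [← hlintegral hf₂ hf₂0]
        refine (ENNReal.ofReal_le_ofReal (h n)).trans ?_
        rw [hlintegral hf₁ hf₁0]
        refine lintegral_mono_ae ?_
        filter_upwards [hf₁0, Measure.ae_ne volume x] with y hy hyx
        exact ENNReal.ofReal_le_ofReal (mul_le_mul_of_nonneg_left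
          (truncRiesz_le_rieszKernel s (hr n) (sub_ne_zero.2 hyx)) hy)

end Limits

section Potential

variable {d : ℕ} {s m κ γ c : ℝ} {ρ : Ed d → ℝ} {u : Ed d → ℝ → ℝ}

lemma rieszPotU_eq_lintegral_rieszKernel [Nontrivial (Ed d)] (s k : ℝ) (ρ : Ed d → ℝ)
    (u : Ed d → ℝ → ℝ) (x : Ed d) (t : ℝ) :
    rieszPotU d s k ρ u x t
      = ENNReal.ofReal k * ∫⁻ y, ENNReal.ofReal (u y t * ρ y * rieszKernel s (y - x)) := by
  rw [rieszPotU]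
  congr 1
  refine lintegral_congr_ae ((Measure.ae_ne volume x).mono fun y hy => ?_)
  beta_reduce
  rw [ENNReal.ofReal_rpow_of_pos (norm_pos_iff.2 (sub_ne_zero.2 hy.symm)),
    ENNReal.ofReal_mul' (rieszKernel_nonneg s _), mul_comm, rieszKernel, norm_sub_rev,
    finrank_euclideanSpace_fin]

namespace WeakSolCore

lemma ae_integral_mul_truncRiesz_le (hu : WeakSolCore d s m κ ρ u) (hs0 : 0 < s) (hs1 : s < 1)
    (hd : 2 * s < d) (hm : 1 ≤ m) (hκ : 0 ≤ κ) (hγ0 : 0 ≤ γ) (hγd : γ < d) (hc : 0 < c)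
    (hρm : Measurable ρ) (hρ : ∀ᵐ x, c * (1 + ‖x‖) ^ (-γ) ≤ ρ x) (x : Ed d) {r : ℝ} (hr : 0 < r) :
    ∀ᵐ p : ℝ × ℝ, 0 < p.1 → p.1 ≤ p.2 →
      ∫ y, u y p.2 * ρ y * truncRiesz s r (y - x)
        ≤ ∫ y, u y p.1 * ρ y * truncRiesz s r (y - x) := by
  have hn : 2 * s < finrank ℝ (Ed d) := by rwa [finrank_euclideanSpace_fin]
  have hρ0 : ∀ᵐ y, 0 ≤ ρ y := hρ.mono fun y hy => le_trans (by positivity) hy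
  have hτ (n : ℕ) : (0 : ℝ) < 1 / (n + 1) := by positivity
  choose D hD0 hD using fun n =>
    hu.exists_neg_le_gagliardoE_rieszTest hs0 hs1 hd hm hκ hγ0 hγd.le hc hρ (hτ n)
  have htest : ∀ᵐ p : ℝ × ℝ, ∀ n j : ℕ, 1 / ((n : ℝ) + 1) < p.1 → p.1 ≤ p.2 →
      ∫ y, u y p.2 * ρ y * rieszTest s r (j + 1) (y - x)
        ≤ (∫ y, u y p.1 * ρ y * rieszTest s r (j + 1) (y - x))
          + D n * (1 + ‖x‖) ^ γ * ((j : ℝ) + 1) ^ (γ - d) * (p.2 - p.1) := by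
    refine ae_all_iff.2 fun n => ae_all_iff.2 fun j => ?_
    refine hu.ae_integral_mul_le_add hρm hρ0 (ψ := fun y => rieszTest s r (j + 1) (y - x))
      ((contDiff_rieszTest hn _ _).comp (contDiff_id.sub contDiff_const))
      ((hasCompactSupport_rieszTest hn hr (by positivity)).comp_homeomorph (Homeomorph.subRight x))
      (hτ n) (mul_nonneg (mul_nonneg (hD0 n) (by positivity)) (by positivity)) ?_
    filter_upwards [hD n] with t ht hnt using ht hnt x r _ hr (by simp)
  obtain ⟨_, _, hmass⟩ := hu.exists_ae_integral_le
  filter_upwards [htest, ae_fst_and_snd hmass] with p hp ⟨hp₁, hp₂⟩ h0 hle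
  obtain ⟨n, hn0⟩ := exists_nat_one_div_lt h0
  have hgain : Tendsto (fun j : ℕ =>
      D n * (1 + ‖x‖) ^ γ * ((j : ℝ) + 1) ^ (γ - d) * (p.2 - p.1)) atTop (𝓝 0) := by
    simpa using ((tendsto_add_one_rpow_neg (sub_neg.2 hγd)).const_mul _).mul_const (p.2 - p.1)
  have hlim₁ := (tendsto_integral_mul_rieszTest hn (hp₁ h0).1 hr x).add hgain
  rw [add_zero] at hlim₁
  exact le_of_tendsto_of_tendsto' (tendsto_integral_mul_rieszTest hn (hp₂ (h0.trans_le hle)).1 hr x)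
    hlim₁ fun j => hp n j hn0 hle

lemma ae_forall_integral_mul_truncRiesz_le (hu : WeakSolCore d s m κ ρ u) (hs0 : 0 < s)
    (hs1 : s < 1) (hd : 2 * s < d) (hm : 1 ≤ m) (hκ : 0 ≤ κ) (hγ0 : 0 ≤ γ) (hγd : γ < d)
    (hc : 0 < c) (hρm : Measurable ρ) (hρ : ∀ᵐ x, c * (1 + ‖x‖) ^ (-γ) ≤ ρ x) {r : ℝ}
    (hr : 0 < r) :
    ∀ᵐ p : ℝ × ℝ, 0 < p.1 → p.1 ≤ p.2 → ∀ x,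
      ∫ y, u y p.2 * ρ y * truncRiesz s r (y - x)
        ≤ ∫ y, u y p.1 * ρ y * truncRiesz s r (y - x) := by
  have hn : 2 * s < finrank ℝ (Ed d) := by rwa [finrank_euclideanSpace_fin]
  obtain ⟨_, _, hmass⟩ := hu.exists_ae_integral_le
  filter_upwards [ae_fst_and_snd hmass, ae_all_iff.2 fun i => hu.ae_integral_mul_truncRiesz_le
    hs0 hs1 hd hm hκ hγ0 hγd hc hρm hρ (TopologicalSpace.denseSeq (Ed d) i) hr]
    with p ⟨hp₁, hp₂⟩ hp h0 hle x
  refine (TopologicalSpace.denseRange_denseSeq (Ed d)).induction_on x ?_ fun i => hp i h0 hle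
  exact isClosed_le (continuous_integral_mul_truncRiesz hn (hp₂ (h0.trans_le hle)).1 hr)
    (continuous_integral_mul_truncRiesz hn (hp₁ h0).1 hr)

end WeakSolCore

end Potential

theorem potential_monotone_in_time_general
    (d : ℕ) (s m κ γ c : ℝ) (k : ℝ≥0)
    (hs0 : 0 < s) (hs1 : s < 1) (hd : 2 * s < (d : ℝ)) (hm : 1 ≤ m) (hκ : 0 ≤ κ)
    (hγ0 : 0 ≤ γ) (hγd : γ < (d : ℝ)) (hc : 0 < c)
    (ρ : Ed d → ℝ) (hρm : Measurable ρ) (hρ : ∀ᵐ x, c * (1 + ‖x‖) ^ (-γ) ≤ ρ x)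
    (u : Ed d → ℝ → ℝ) (hu : WeakSolCore d s m κ ρ u) :
    ∀ᵐ p : ℝ × ℝ, 0 < p.1 → p.1 ≤ p.2 →
      ∀ x, rieszPotU d s k ρ u x p.2 ≤ rieszPotU d s k ρ u x p.1 := by
  have hn : 2 * s < finrank ℝ (Ed d) := by rwa [finrank_euclideanSpace_fin]
  have := nontrivial_of_two_mul_lt_finrank hs0 hn
  obtain ⟨_, _, hmass⟩ := hu.exists_ae_integral_le
  have htrunc := ae_all_iff.2 fun n : ℕ => hu.ae_forall_integral_mul_truncRiesz_le
    hs0 hs1 hd hm hκ hγ0 hγd hc hρm hρ (r := 1 / ((n : ℝ) + 1)) (by positivity)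
  have hnonneg (t : ℝ) : 0 ≤ᵐ[volume] fun y => u y t * ρ y :=
    hρ.mono fun y hy => mul_nonneg (hu.nonneg y t) (le_trans (by positivity) hy)
  filter_upwards [ae_fst_and_snd hmass, htrunc] with p ⟨hp₁, hp₂⟩ hp h0 hle x
  simp only [rieszPotU_eq_lintegral_rieszKernel]
  exact mul_le_mul' le_rfl (lintegral_mul_rieszKernel_le hn (hp₁ h0).1 (hp₂ (h0.trans_le hle)).1
    (hnonneg _) (hnonneg _) fun n => hp n h0 hle x)

/-- **Monotonicity in time of the potential.** If `u` is a weak solution of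
the Cauchy problem with initial datum `μ`, then the Riesz potential
`U(·,t)` of `ρ(·)u(·,t)` is essentially nonincreasing in time: for a.e. pair
`(t₁,t₂)` with `0 < t₁ ≤ t₂`, `U(x,t₂) ≤ U(x,t₁)` for a.e. `x`. -/
theorem potential_monotone_in_time
    (d : ℕ) (s m κ k γ₀ γ c C : ℝ)
    (hs0 : 0 < s) (hs1 : s < 1) (hd : 2 * s < (d : ℝ)) (hm : 1 < m)
    (hκ : 0 < κ) (hk : 0 < k)
    (hγ₀0 : 0 ≤ γ₀) (hγ₀γ : γ₀ ≤ γ) (hγs : γ < 2 * s) (hγd : γ ≤ (d : ℝ) - 2 * s)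
    (ρ : Ed d → ℝ) (hρ : AdmissibleWeight d ρ γ₀ γ c C)
    (μ : Measure (Ed d)) (hμ : IsFiniteMeasure μ)
    (u : Ed d → ℝ → ℝ) (hu : IsWeakSolution d s m κ ρ μ u) :
    ∀ᵐ p ∂(volume : Measure (ℝ × ℝ)), 0 < p.1 → p.1 ≤ p.2 →
      ∀ᵐ x ∂(volume : Measure (Ed d)),
        rieszPotU d s k ρ u x p.2 ≤ rieszPotU d s k ρ u x p.1 := by
  have := nontrivial_of_two_mul_lt_finrank (E := Ed d) hs0 (by rwa [finrank_euclideanSpace_fin])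
  have hγ : 0 ≤ γ := hγ₀0.trans hγ₀γ
  exact (potential_monotone_in_time_general d s m κ γ c ⟨k, hk.le⟩ hs0 hs1 hd hm.le hκ.le hγ
    (by linarith) hρ.1 ρ hρ.2.2.1 (hρ.ae_mul_rpow_le hγ₀0 hγ) u hu.1).mono
    fun p hp h₀ hle => ae_of_all _ (hp h₀ hle)
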